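/- arXiv:2406.15924 — 3 statements merged into one kernel-verified Lean document; each statement's English description precedes it below -/
import Mathlib

section
/- Let m > 0 and let q : ℂ² → ℂ be a quadratic form (a homogeneous polynomial of degree 2 in two complex variables) such that the set {q(x,ξ) : (x,ξ) ∈ ℝ²} is not all of ℂ and q(x,ξ) ≠ 0 for every (x,ξ) ∈ ℝ² \ {(0,0)}. Let p be holomorphic on an open neighbourhood of 0 ∈ ℂ² with p(w) = q(w) + O(|w|³) as w → 0. Then there exist ε > 0, a holomorphic map F : B(0,ε) ⊆ ℂ² → ℂ² with F(0) = 0 and derivative DF(0) = Id, and a holomorphic function f on a neighbourhood of 0 ∈ ℂ with f(0) = 1, such that for all w ∈ B(0,ε): p(F(w)) = q(w), and the determinant of the complex derivative DF(w) equals f(q(w)). (Vey's Morse lemma in dimension two: F pulls p back to its quadratic part and pulls the symplectic form dξ∧dx back to f(q) dζ∧dz.) -/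
open Complex Metric Asymptotics

namespace Vey
open Filter Topology

/-- Normalized Fourier-type coefficient on a circle. -/
noncomputable def cf (R : ℝ) (i : ℕ) (g : ℝ → ℂ) : ℂ :=
  (2 * Real.pi : ℂ)⁻¹ * ∫ θ in (0:ℝ)..(2 * Real.pi), ((circleMap 0 R θ)⁻¹) ^ i * g θ

lemma cf_bound {R : ℝ} (hR : 0 < R) (i : ℕ) (g : ℝ → ℂ) (M : ℝ) (hg : ∀ θ, ‖g θ‖ ≤ M) :
    ‖cf R i g‖ ≤ R⁻¹ ^ i * M := by
  have h1 : ‖∫ θ in (0:ℝ)..(2 * Real.pi), ((circleMap 0 R θ)⁻¹) ^ i * g θ‖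
      ≤ (R⁻¹ ^ i * M) * |2 * Real.pi - 0| := by
    apply intervalIntegral.norm_integral_le_of_norm_le_const
    intro θ _
    rw [norm_mul, norm_pow, norm_inv, norm_circleMap_zero, abs_of_pos hR]
    gcongr
    exact hg θ
  have hpi : 0 < 2 * Real.pi := Real.two_pi_pos
  rw [sub_zero, abs_of_pos hpi] at h1
  unfold cf
  rw [norm_mul, norm_inv]
  have : ‖(2 * Real.pi : ℂ)‖ = 2 * Real.pi := by
    simp [abs_of_pos Real.pi_pos]
  rw [this, inv_mul_le_iff₀ hpi]
  linarith

lemma cf_hasSum {R : ℝ} (hR : 0 < R) (g : ℂ → ℂ) (hg : DifferentiableOn ℂ g (closedBall 0 R))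
    {w : ℂ} (hw : ‖w‖ < R) :
    HasSum (fun i => cf R i (fun θ => g (circleMap 0 R θ)) * w ^ i) (g w) := by
  lift R to NNReal using hR.le
  have h := (hg.hasFPowerSeriesOnBall (by exact_mod_cast hR)).hasSum (y := w) (by
    rw [Metric.eball_coe]; simpa using hw)
  rw [zero_add] at h
  convert! h using 2 with i
  rw [cauchyPowerSeries_apply, circleIntegral, cf]
  simp only [deriv_circleMap, smul_eq_mul, sub_zero, mul_inv]
  rw [mul_assoc, ← intervalIntegral.integral_mul_const, mul_assoc (2⁻¹ * _),
    ← intervalIntegral.integral_const_mul (I⁻¹)]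
  congr 1
  apply intervalIntegral.integral_congr
  intro θ _
  have hne : circleMap 0 (R:ℝ) θ ≠ 0 := circleMap_ne_center hR.ne'
  have := I_ne_zero
  simp only
  rw [inv_pow, div_pow]
  field_simp

lemma cf_swap {R : ℝ} (hR : 0 < R) (i : ℕ) (G : ℕ → ℝ → ℂ) (hG : ∀ j, Continuous (G j))
    (u : ℕ → ℝ) (hu : Summable u) (hGu : ∀ j θ, ‖G j θ‖ ≤ u j) (g : ℝ → ℂ)
    (hg : ∀ θ, HasSum (fun j => G j θ) (g θ)) :
    HasSum (fun j => cf R i (G j)) (cf R i g) := by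
  unfold cf
  apply HasSum.mul_left
  have hc : Continuous fun θ => ((circleMap 0 R θ)⁻¹) ^ i :=
    ((continuous_circleMap 0 R).inv₀ (fun θ => circleMap_ne_center hR.ne')).pow i
  apply intervalIntegral.hasSum_integral_of_dominated_convergence (fun j _ => R⁻¹ ^ i * u j)
  · intro j
    exact (hc.mul (hG j)).aestronglyMeasurable
  · intro j
    refine Eventually.of_forall fun θ _ => ?_
    rw [norm_mul, norm_pow, norm_inv, norm_circleMap_zero, abs_of_pos hR]
    gcongr
    exact hGu j θ
  · exact Eventually.of_forall fun θ _ => hu.mul_left _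
  · simp
  · exact Eventually.of_forall fun θ _ => (hg θ).mul_left _

/-- Boundedness of coefficients at radius `r`. -/
def Bd (r M : ℝ) (c : ℕ × ℕ → ℂ) : Prop := ∀ ij : ℕ × ℕ, ‖c ij‖ * r ^ (ij.1 + ij.2) ≤ M

noncomputable def tm (c : ℕ × ℕ → ℂ) (w : ℂ × ℂ) (ij : ℕ × ℕ) : ℂ :=
  c ij * w.1 ^ ij.1 * w.2 ^ ij.2

lemma tm_norm_le {r M ρ : ℝ} (hr : 0 < r) {c : ℕ × ℕ → ℂ} (hc : Bd r M c) 
    {w : ℂ × ℂ} (h1 : ‖w.1‖ ≤ ρ) (h2 : ‖w.2‖ ≤ ρ) (ij : ℕ × ℕ) :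
    ‖tm c w ij‖ ≤ M * ((ρ / r) ^ ij.1 * (ρ / r) ^ ij.2) := by
  have h := hc ij
  have hρ : 0 ≤ ρ := (norm_nonneg _).trans h1
  unfold tm
  rw [norm_mul, norm_mul, norm_pow, norm_pow]
  calc ‖c ij‖ * ‖w.1‖ ^ ij.1 * ‖w.2‖ ^ ij.2 ≤ ‖c ij‖ * ρ ^ ij.1 * ρ ^ ij.2 := by gcongr
    _ = (‖c ij‖ * r ^ (ij.1 + ij.2)) * ((ρ / r) ^ ij.1 * (ρ / r) ^ ij.2) := by
      rw [div_pow, div_pow, pow_add]; field_simp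
    _ ≤ _ := by gcongr

lemma geo_summable {r M ρ : ℝ} (hρ : 0 ≤ ρ) (hρr : ρ < r) :
    Summable fun ij : ℕ × ℕ => M * ((ρ / r) ^ ij.1 * (ρ / r) ^ ij.2) := by
  have hr : 0 < r := hρ.trans_lt hρr
  have h := summable_geometric_of_lt_one (r := ρ / r) (by positivity) ((div_lt_one hr).2 hρr)
  exact (h.mul_of_nonneg h (fun _ => by positivity) (fun _ => by positivity)).mul_left M

lemma tm_summable {r M : ℝ} {c : ℕ × ℕ → ℂ} (hc : Bd r M c) {w : ℂ × ℂ} (hw : ‖w‖ < r) :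
    Summable (tm c w) :=
  Summable.of_norm_bounded (geo_summable (norm_nonneg w) hw)
    (tm_norm_le ((norm_nonneg w).trans_lt hw) hc (norm_fst_le w) (norm_snd_le w))

noncomputable def sr (c : ℕ × ℕ → ℂ) (w : ℂ × ℂ) : ℂ := ∑' ij, tm c w ij

lemma exists_coeffs (h : ℂ × ℂ → ℂ) (hh : ∀ᶠ w in 𝓝 (0 : ℂ × ℂ), DifferentiableAt ℂ h w) :
    ∃ (r M : ℝ) (c : ℕ × ℕ → ℂ), 0 < r ∧ Bd r M c ∧
      ∀ w : ℂ × ℂ, ‖w‖ < r → HasSum (tm c w) (h w) := by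
  obtain ⟨R, hR, hRd⟩ := nhds_basis_closedBall.mem_iff.1 hh
  have hd : ∀ x y : ℂ, ‖x‖ ≤ R → ‖y‖ ≤ R → DifferentiableAt ℂ h (x, y) := by
    intro x y hx hy
    apply hRd
    simpa [Prod.norm_def] using ⟨hx, hy⟩
  have hcont : ContinuousOn h (closedBall 0 R) := fun w hw => (hRd hw).continuousAt.continuousWithinAt
  obtain ⟨M, hM⟩ := (isCompact_closedBall (0 : ℂ × ℂ) R).exists_bound_of_continuousOn hcont
  have hb : ∀ x y : ℂ, ‖x‖ ≤ R → ‖y‖ ≤ R → ‖h (x, y)‖ ≤ M := by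
    intro x y hx hy
    apply hM
    simpa [Prod.norm_def] using ⟨hx, hy⟩
  have he : ∀ θ, ‖circleMap 0 R θ‖ ≤ R := by
    intro θ; rw [norm_circleMap_zero, abs_of_pos hR]
  let b : ℕ → ℝ → ℂ := fun j θ => cf R j (fun φ => h (circleMap 0 R θ, circleMap 0 R φ))
  have hbb : ∀ j θ, ‖b j θ‖ ≤ R⁻¹ ^ j * M := fun j θ =>
    cf_bound hR j _ M (fun φ => hb _ _ (he _) (he _))
  have hbc : ∀ j, Continuous (b j) := by
    intro j
    apply Continuous.mul continuous_const
    apply intervalIntegral.continuous_parametric_intervalIntegral_of_continuous'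
    have h1 : Continuous fun p : ℝ × ℝ => h (circleMap 0 R p.1, circleMap 0 R p.2) := by
      rw [continuous_iff_continuousAt]
      intro p
      have := (hd _ _ (he p.1) (he p.2)).continuousAt
      exact ContinuousAt.comp (f := fun p : ℝ × ℝ => (circleMap 0 R p.1, circleMap 0 R p.2)) this 
        (by fun_prop)
    have h2 : Continuous fun p : ℝ × ℝ => ((circleMap 0 R p.2)⁻¹) ^ j :=
      (((continuous_circleMap 0 R).inv₀ (fun θ => circleMap_ne_center hR.ne')).pow j).comp
        continuous_snd
    exact h2.mul h1
  let c : ℕ × ℕ → ℂ := fun ij => cf R ij.1 (b ij.2)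
  have hBd : Bd R M c := by
    intro ij
    have := cf_bound hR ij.1 (b ij.2) _ (hbb ij.2)
    calc ‖c ij‖ * R ^ (ij.1 + ij.2) ≤ (R⁻¹ ^ ij.1 * (R⁻¹ ^ ij.2 * M)) * R ^ (ij.1 + ij.2) := by
          gcongr
      _ = M := by rw [pow_add, inv_pow, inv_pow]; field_simp
  refine ⟨R, M, c, hR, hBd, ?_⟩
  rintro ⟨x, y⟩ hw
  have hx : ‖x‖ < R := (norm_fst_le (x, y)).trans_lt hw
  have hy : ‖y‖ < R := (norm_snd_le (x, y)).trans_lt hw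
  have hs := tm_summable hBd hw
  have key1 : HasSum (fun i => cf R i (fun θ => h (circleMap 0 R θ, y)) * x ^ i) (h (x, y)) := by
    apply cf_hasSum hR (fun z => h (z, y)) _ hx
    intro z hz
    have hz' : ‖z‖ ≤ R := by simpa using hz
    exact (DifferentiableAt.comp z (f := fun z => (z, y)) (hd z y hz' hy.le)
      (by fun_prop)).differentiableWithinAt
  have key2 : ∀ i, HasSum (fun j => cf R i (b j) * y ^ j)
      (cf R i (fun θ => h (circleMap 0 R θ, y))) := by
    intro i
    have hθ : ∀ θ, HasSum (fun j => b j θ * y ^ j) (h (circleMap 0 R θ, y)) := by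
      intro θ
      apply cf_hasSum hR (fun z => h (circleMap 0 R θ, z)) _ hy
      intro z hz
      have hz' : ‖z‖ ≤ R := by simpa using hz
      exact (DifferentiableAt.comp z (f := fun z => (circleMap 0 R θ, z)) (hd _ z (he θ) hz')
        (by fun_prop)).differentiableWithinAt
    have := cf_swap hR i (fun j θ => b j θ * y ^ j) (fun j => (hbc j).mul continuous_const)
      (fun j => M * (‖y‖ / R) ^ j)
      ((summable_geometric_of_lt_one (by positivity) ((div_lt_one hR).2 hy)).mul_left M) ?_ _ hθ
    · convert! this using 2 with j
      simp only [cf]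
      rw [mul_assoc, ← intervalIntegral.integral_mul_const]
      simp only [mul_assoc]
    · intro j θ
      rw [norm_mul, norm_pow]
      calc ‖b j θ‖ * ‖y‖ ^ j ≤ (R⁻¹ ^ j * M) * ‖y‖ ^ j := by gcongr; exact hbb j θ
        _ = _ := by rw [div_pow, inv_pow]; field_simp
  have key3 : ∀ i, HasSum (fun j => tm c (x, y) (i, j))
      (cf R i (fun θ => h (circleMap 0 R θ, y)) * x ^ i) := by
    intro i
    convert! (key2 i).mul_right (x ^ i) using 2 with j
    simp only [tm, c]; ring
  have := hs.hasSum.prod_fiberwise key3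
  rw [← this.unique key1]
  exact hs.hasSum

lemma sr_analyticAt {r M : ℝ} (hr : 0 < r) {c : ℕ × ℕ → ℂ} (hc : Bd r M c) :
    AnalyticAt ℂ (sr c) 0 := by
  let t : ∀ n : ℕ, ℕ × ℕ → ContinuousMultilinearMap ℂ (fun _ : Fin n => ℂ × ℂ) ℂ := fun n ij =>
    c ij • (ContinuousMultilinearMap.mkPiAlgebraFin ℂ n ℂ).compContinuousLinearMap
      (fun k : Fin n => if (k : ℕ) < ij.1 then ContinuousLinearMap.fst ℂ ℂ ℂ
        else ContinuousLinearMap.snd ℂ ℂ ℂ)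
  have ht : ∀ n ij, ‖t n ij‖ ≤ ‖c ij‖ := by
    intro n ij
    rw [norm_smul]
    refine mul_le_of_le_one_right (norm_nonneg _) ?_
    refine (ContinuousMultilinearMap.norm_compContinuousLinearMap_le _ _).trans ?_
    rw [ContinuousMultilinearMap.norm_mkPiAlgebraFin, one_mul]
    apply Finset.prod_le_one
    · intros; positivity
    · intro k _
      split_ifs
      · exact ContinuousLinearMap.norm_fst_le ..
      · exact ContinuousLinearMap.norm_snd_le ..
  have htv : ∀ (n : ℕ) (ij : ℕ × ℕ) (w : ℂ × ℂ), ij ∈ Finset.HasAntidiagonal.antidiagonal n →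
      t n ij (fun _ => w) = tm c w ij := by
    intro n ij w hij
    obtain ⟨i, j⟩ := ij
    have hn : i + j = n := by simpa using hij
    simp only [t, smul_apply,
      ContinuousMultilinearMap.compContinuousLinearMap_apply, tm, smul_eq_mul, mul_assoc]
    congr 1
    rw [ContinuousMultilinearMap.mkPiAlgebraFin_apply, List.prod_ofFn]
    subst hn
    rw [Fin.prod_univ_add]
    simp
  let P : FormalMultilinearSeries ℂ (ℂ × ℂ) ℂ := fun n => ∑ ij ∈ Finset.HasAntidiagonal.antidiagonal n, t n ij
  have hM : 0 ≤ M := by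
    have := hc (0, 0); simp at this; exact (norm_nonneg _).trans this
  have hP : ∀ n, ‖P n‖ * (r / 2) ^ n ≤ M := by
    intro n
    have h1 : ‖P n‖ ≤ ∑ ij ∈ Finset.HasAntidiagonal.antidiagonal n, ‖c ij‖ :=
      (norm_sum_le _ _).trans (Finset.sum_le_sum fun ij _ => ht n ij)
    have h2 : (∑ ij ∈ Finset.HasAntidiagonal.antidiagonal n, ‖c ij‖) * r ^ n ≤ (n + 1) * M := by
      rw [Finset.sum_mul]
      calc _ ≤ ∑ ij ∈ Finset.HasAntidiagonal.antidiagonal n, M := by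
            apply Finset.sum_le_sum
            intro ij hij
            have := hc ij
            rwa [Finset.HasAntidiagonal.mem_antidiagonal.1 hij] at this
        _ = _ := by simp
    have h3 : ((n : ℝ) + 1) ≤ 2 ^ n := by
      exact_mod_cast Nat.lt_two_pow_self
    rw [div_pow, mul_div_assoc', div_le_iff₀ (by positivity)]
    calc ‖P n‖ * r ^ n ≤ _ := by gcongr
      _ ≤ _ := h2
      _ ≤ 2 ^ n * M := by gcongr
      _ = _ := by ring
  lift r to NNReal using hr.le
  have hr2 : (0 : NNReal) < r / 2 := by
    have : 0 < r := by exact_mod_cast hr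
    positivity
  have hfp : HasFPowerSeriesOnBall (sr c) P 0 ((r / 2 : NNReal) : ENNReal) := by
    refine ⟨P.le_radius_of_bound M (by simpa using hP), by exact_mod_cast hr2, ?_⟩
    intro w hw
    rw [Metric.eball_coe] at hw
    have hw' : ‖w‖ < r := by
      have : ‖w‖ < r / 2 := by simpa using hw
      have h0 : (0:ℝ) < r := hr
      linarith
    have hs := (tm_summable hc hw').hasSum
    rw [zero_add]
    rw [← Finset.HasAntidiagonal.sigmaAntidiagonalEquivProd.hasSum_iff] at hs
    have := hs.sigma (fun n => hasSum_fintype _)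
    convert! this using 2 with n
    rw [sum_apply, Finset.univ_eq_attach, 
      ← Finset.sum_attach (Finset.HasAntidiagonal.antidiagonal n)]
    apply Finset.sum_congr rfl
    intro ij _
    rw [htv n ij w ij.2]
    rfl
  exact hfp.analyticAt


lemma Bd_mono {r M M' : ℝ} (hr : 0 < r) {c c' : ℕ × ℕ → ℂ} (hc : Bd r M c)
    (h : ∀ ij, ‖c' ij‖ ≤ ‖c ij‖) (hM : M ≤ M') : Bd r M' c' := by
  intro ij
  refine le_trans ?_ ((hc ij).trans hM)
  have := h ij
  gcongr

lemma hadamard (h : ℂ × ℂ → ℂ) (hh : ∀ᶠ w in 𝓝 (0 : ℂ × ℂ), DifferentiableAt ℂ h w) :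
    ∃ (A B : ℂ × ℂ → ℂ) (α β γ κ : ℂ), AnalyticAt ℂ A 0 ∧ AnalyticAt ℂ B 0 ∧
      ∀ᶠ w in 𝓝 (0 : ℂ × ℂ), h w = α + β * w.1 + γ * w.2 + κ * w.1 * w.2
        + w.1 ^ 2 * A w + w.2 ^ 2 * B w := by
  obtain ⟨r, M, c, hr, hc, hs⟩ := exists_coeffs h hh
  let cA : ℕ × ℕ → ℂ := fun ij => c (ij.1 + 2, ij.2)
  let cB : ℕ × ℕ → ℂ := fun ij => if ij.1 < 2 then c (ij.1, ij.2 + 2) else 0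
  have hM : 0 ≤ M := by
    have := hc (0, 0); simp at this; exact (norm_nonneg _).trans this
  have hA : Bd r (M / r ^ 2) cA := by
    intro ij
    have := hc (ij.1 + 2, ij.2)
    rw [le_div_iff₀ (by positivity)]
    refine le_trans (le_of_eq ?_) this
    simp only [cA]; ring
  have hB : Bd r (M / r ^ 2) cB := by
    intro ij
    rw [le_div_iff₀ (by positivity)]
    by_cases hi : ij.1 < 2
    · have := hc (ij.1, ij.2 + 2)
      refine le_trans (le_of_eq ?_) this
      simp only [cB, if_pos hi]; ring
    · simp only [cB, if_neg hi]; simpa using hM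
  refine ⟨sr cA, sr cB, c (0, 0), c (1, 0), c (0, 1), c (1, 1), sr_analyticAt hr hA,
    sr_analyticAt hr hB, ?_⟩
  filter_upwards [ball_mem_nhds (0 : ℂ × ℂ) hr] with w hw
  have hw : ‖w‖ < r := by simpa using hw
  have s1 : HasSum (fun ij : ℕ × ℕ => if 2 ≤ ij.1 then tm c w ij else 0) (w.1 ^ 2 * sr cA w) := by
    have inj : Function.Injective (fun ij : ℕ × ℕ => (ij.1 + 2, ij.2)) := by
      rintro ⟨i, j⟩ ⟨k, l⟩ hkl; simpa using hkl
    rw [← inj.hasSum_iff]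
    · convert! (tm_summable hA hw).hasSum.mul_left (w.1 ^ 2) using 2 with ij
      simp [tm, cA]; ring
    · rintro ⟨i, j⟩ hij
      rw [if_neg]
      intro hi
      exact hij ⟨(i - 2, j), by simp; omega⟩
  have s2 : HasSum (fun ij : ℕ × ℕ => if ij.1 < 2 ∧ 2 ≤ ij.2 then tm c w ij else 0)
      (w.2 ^ 2 * sr cB w) := by
    have inj : Function.Injective (fun ij : ℕ × ℕ => (ij.1, ij.2 + 2)) := by
      rintro ⟨i, j⟩ ⟨k, l⟩ hkl; simpa using hkl
    rw [← inj.hasSum_iff]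
    · convert! (tm_summable hB hw).hasSum.mul_left (w.2 ^ 2) using 2 with ij
      by_cases hi : ij.1 < 2
      · have hi' : ij.1 ≤ 1 := by omega
        simp [tm, cB, hi']; ring
      · have hi' : ¬ ij.1 ≤ 1 := by omega
        simp [tm, cB, hi']
    · rintro ⟨i, j⟩ hij
      rw [if_neg]
      rintro ⟨_, hj⟩
      exact hij ⟨(i, j - 2), by simp at hj; simp; omega⟩
  have s3 : HasSum (fun ij : ℕ × ℕ => if ij.1 < 2 ∧ ij.2 < 2 then tm c w ij else 0)
      (∑ ij ∈ Finset.range 2 ×ˢ Finset.range 2,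
        if ij.1 < 2 ∧ ij.2 < 2 then tm c w ij else 0) := by
    apply hasSum_sum_of_ne_finset_zero
    intro ij hij
    rw [if_neg]
    simpa using hij
  have st := (s1.add s2).add s3
  have : tm c w = fun ij : ℕ × ℕ => ((if 2 ≤ ij.1 then tm c w ij else 0) +
      (if ij.1 < 2 ∧ 2 ≤ ij.2 then tm c w ij else 0)) +
      (if ij.1 < 2 ∧ ij.2 < 2 then tm c w ij else 0) := by
    funext ij
    by_cases h1 : 2 ≤ ij.1
    · have : ¬ ij.1 < 2 := by omega
      simp [h1, this]
    · have h1' : ij.1 < 2 := by omega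
      by_cases h2 : 2 ≤ ij.2
      · have : ¬ ij.2 < 2 := by omega
        simp [h1, h1', h2, this]
      · have h2' : ij.2 < 2 := by omega
        simp [h1, h1', h2, h2']
  rw [← this] at st
  rw [(hs w hw).unique st, Finset.sum_product]
  simp [Finset.sum_range_succ, tm]
  ring

lemma quad_zero (α β : ℂ) (g : ℂ → ℂ) (hg : ContinuousAt g 0)
    (h : (fun t : ℂ => α + β * t + g t * t ^ 2) =O[𝓝 0] fun t : ℂ => ‖t‖ ^ 3) :
    α = 0 ∧ β = 0 ∧ g 0 = 0 := by
  have hα : α = 0 := by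
    have h1 : Tendsto (fun t : ℂ => α + β * t + g t * t ^ 2) (𝓝 0) (𝓝 0) := by
      apply h.trans_tendsto
      have : Continuous fun t : ℂ => ‖t‖ ^ 3 := by fun_prop
      simpa using this.tendsto 0
    have h2 : ContinuousAt (fun t : ℂ => α + β * t + g t * t ^ 2) 0 := by fun_prop
    have := tendsto_nhds_unique h1 h2
    simpa using this.symm
  subst hα
  have hO : ∀ (k : ℂ → ℂ) (n : ℕ), ContinuousAt k 0 → 0 < n →
      (fun t : ℂ => k t * t ^ (3 - n)) =O[𝓝[≠] 0] (fun t : ℂ => t ^ 3) → n ≤ 3 → k 0 = 0 := by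
    intro k n hk hn hk2 hn3
    have h1 : k =O[𝓝[≠] 0] (fun t : ℂ => t ^ n) := by
      have := hk2.mul (isBigO_refl (fun t : ℂ => (t ^ (3 - n))⁻¹) (𝓝[≠] 0))
      refine (this.congr' ?_ ?_)
      · filter_upwards [self_mem_nhdsWithin] with t ht
        have : t ≠ 0 := ht
        field_simp
      · filter_upwards [self_mem_nhdsWithin] with t ht
        have ht : t ≠ 0 := ht
        rw [mul_inv_eq_iff_eq_mul₀ (pow_ne_zero _ ht), ← pow_add]
        congr 1; omega
    have h2 : Tendsto k (𝓝[≠] 0) (𝓝 0) := by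
      apply h1.trans_tendsto
      have : Continuous fun t : ℂ => t ^ n := by fun_prop
      have := (this.tendsto 0).mono_left (nhdsWithin_le_nhds (s := {0}ᶜ))
      simpa [hn.ne'] using this
    exact tendsto_nhds_unique (hk.tendsto.mono_left nhdsWithin_le_nhds) h2
  have h3 : (fun t : ℂ => 0 + β * t + g t * t ^ 2) =O[𝓝[≠] 0] fun t : ℂ => t ^ 3 := by
    refine (h.mono nhdsWithin_le_nhds).trans (IsBigO.of_bound 1 (Eventually.of_forall fun t => ?_))
    simp
  have hβ : β = 0 := by
    have := hO (fun t => β + g t * t) 2 (by fun_prop) (by norm_num)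
      (h3.congr_left fun t => by ring) (by norm_num)
    simpa using this
  subst hβ
  exact ⟨rfl, rfl, hO g 1 hg (by norm_num) (h3.congr_left fun t => by ring) (by norm_num)⟩

lemma quad_form (p : ℂ × ℂ → ℂ) (hp : ∀ᶠ w in 𝓝 (0 : ℂ × ℂ), DifferentiableAt ℂ p w)
    (hO : (fun w : ℂ × ℂ => p w - w.1 * w.2) =O[𝓝 0] fun w : ℂ × ℂ => ‖w‖ ^ 3) :
    ∃ A B : ℂ × ℂ → ℂ, AnalyticAt ℂ A 0 ∧ AnalyticAt ℂ B 0 ∧ A 0 = 0 ∧ B 0 = 0 ∧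
      ∀ᶠ w in 𝓝 (0 : ℂ × ℂ), p w = w.1 ^ 2 * A w + w.1 * w.2 + w.2 ^ 2 * B w := by
  obtain ⟨A, B, α, β, γ, κ, hA, hB, he⟩ := hadamard (fun w => p w - w.1 * w.2) (by
    filter_upwards [hp] with w hw
    exact hw.sub (by fun_prop))
  have hO' := hO.congr' he (EventuallyEq.refl _ _)
  have line : ∀ v : ℂ × ℂ, ‖v‖ = 1 → Tendsto (fun t : ℂ => t • v) (𝓝 0) (𝓝 0) := by
    intro v _
    have : Continuous fun t : ℂ => t • v := by fun_prop
    simpa using this.tendsto 0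
  have H : ∀ v : ℂ × ℂ, ‖v‖ = 1 → α = 0 ∧ β * v.1 + γ * v.2 = 0 ∧
      κ * v.1 * v.2 + v.1 ^ 2 * A 0 + v.2 ^ 2 * B 0 = 0 := by
    intro v hv
    have h1 := hO'.comp_tendsto (line v hv)
    have hcA : ContinuousAt (fun t : ℂ => A (t • v)) 0 := by
      apply ContinuousAt.comp (f := fun t : ℂ => t • v)
      · simpa using hA.continuousAt
      · fun_prop
    have hcB : ContinuousAt (fun t : ℂ => B (t • v)) 0 := by
      apply ContinuousAt.comp (f := fun t : ℂ => t • v)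
      · simpa using hB.continuousAt
      · fun_prop
    have := quad_zero α (β * v.1 + γ * v.2)
      (fun t => κ * v.1 * v.2 + v.1 ^ 2 * A (t • v) + v.2 ^ 2 * B (t • v))
      ((continuousAt_const.add (continuousAt_const.mul hcA)).add (continuousAt_const.mul hcB)) ?_
    · simpa using this
    · refine h1.congr (fun t => ?_) (fun t => ?_)
      · simp; ring
      · simp [norm_smul, hv]
  have H1 := H (1, 0) (by simp [Prod.norm_def])
  have H2 := H (0, 1) (by simp [Prod.norm_def])
  have H3 := H (1, 1) (by simp [Prod.norm_def])
  simp at H1 H2 H3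
  obtain ⟨hα, hβ, hA0⟩ := H1
  obtain ⟨-, hγ, hB0⟩ := H2
  obtain ⟨-, -, hκ⟩ := H3
  rw [hA0, hB0] at hκ
  simp at hκ
  refine ⟨A, B, hA, hB, hA0, hB0, ?_⟩
  filter_upwards [he] with w hw
  rw [hα, hβ, hγ, hκ] at hw
  linear_combination hw

lemma hasFDerivAt_mul_lin (g : ℂ × ℂ → ℂ) (hg : AnalyticAt ℂ g 0) (l : ℂ × ℂ →L[ℂ] ℂ) :
    HasFDerivAt (fun w => g w * l w) (g 0 • l) 0 := by
  have := hg.differentiableAt.hasFDerivAt.mul l.hasFDerivAt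
  convert! this using 1
  ext <;> simp

lemma exists_Phi (p : ℂ × ℂ → ℂ) (hp : ∀ᶠ w in 𝓝 (0 : ℂ × ℂ), DifferentiableAt ℂ p w)
    (hO : (fun w : ℂ × ℂ => p w - w.1 * w.2) =O[𝓝 0] fun w : ℂ × ℂ => ‖w‖ ^ 3) :
    ∃ Φ : ℂ × ℂ → ℂ × ℂ, AnalyticAt ℂ Φ 0 ∧ Φ 0 = 0 ∧
      HasFDerivAt Φ (ContinuousLinearMap.id ℂ (ℂ × ℂ)) 0 ∧
      ∀ᶠ w in 𝓝 (0 : ℂ × ℂ), p w = (Φ w).1 * (Φ w).2 := by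
  obtain ⟨A, B, hA, hB, hA0, hB0, he⟩ := quad_form p hp hO
  have hD : AnalyticAt ℂ (fun w => 1 - 4 * A w * B w) 0 := by fun_prop
  have hs : AnalyticAt ℂ (fun w => exp (log (1 - 4 * A w * B w) / 2)) 0 := by
    have := hD.clog (by simp [hA0])
    fun_prop
  have hδ : AnalyticAt ℂ (fun w => (1 + exp (log (1 - 4 * A w * B w) / 2)) / 2) 0 := by fun_prop
  set δ : ℂ × ℂ → ℂ := fun w => (1 + exp (log (1 - 4 * A w * B w) / 2)) / 2 with hδdef
  have hδ0 : δ 0 = 1 := by simp [hδdef, hA0]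
  have hβ : AnalyticAt ℂ (fun w => B w / δ w) 0 := hB.div hδ (by simp [hδ0])
  refine ⟨fun w => (w.1 + B w / δ w * w.2, A w * w.1 + δ w * w.2),
    (analyticAt_fst.add (hβ.mul analyticAt_snd)).prod ((hA.mul analyticAt_fst).add
      (hδ.mul analyticAt_snd)), by simp, ?_, ?_⟩
  · have h1 := hasFDerivAt_mul_lin _ hβ (ContinuousLinearMap.snd ℂ ℂ ℂ)
    have h2 := hasFDerivAt_mul_lin _ hA (ContinuousLinearMap.fst ℂ ℂ ℂ)
    have h3 := hasFDerivAt_mul_lin _ hδ (ContinuousLinearMap.snd ℂ ℂ ℂ)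
    have := ((ContinuousLinearMap.fst ℂ ℂ ℂ).hasFDerivAt.add h1).prodMk (h2.add h3)
    convert! this using 1
    rw [hA0, hδ0, hB0]
    ext <;> simp
  · have e1 : ∀ᶠ w in 𝓝 (0 : ℂ × ℂ), δ w ≠ 0 := hδ.continuousAt.eventually_ne (by simp [hδ0])
    have e2 : ∀ᶠ w in 𝓝 (0 : ℂ × ℂ), 1 - 4 * A w * B w ≠ 0 :=
      hD.continuousAt.eventually_ne (by simp [hA0])
    filter_upwards [he, e1, e2] with w hw h1 h2
    have hsq : exp (log (1 - 4 * A w * B w) / 2) ^ 2 = 1 - 4 * A w * B w := by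
      rw [← exp_nat_mul]
      push_cast
      rw [mul_div_cancel₀ _ two_ne_zero, exp_log h2]
    have hq : δ w ^ 2 = δ w - A w * B w := by
      simp only [hδdef]; linear_combination hsq / 4
    rw [hw]
    have : B w = B w / δ w * δ w := by field_simp
    field_simp
    linear_combination (-w.1 * w.2) * hq

lemma inv_germ (Φ : ℂ × ℂ → ℂ × ℂ) (hΦ : AnalyticAt ℂ Φ 0) (h0 : Φ 0 = 0)
    (hd : HasFDerivAt Φ (ContinuousLinearMap.id ℂ (ℂ × ℂ)) 0) :
    ∃ G : ℂ × ℂ → ℂ × ℂ, AnalyticAt ℂ G 0 ∧ G 0 = 0 ∧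
      HasFDerivAt G (ContinuousLinearMap.id ℂ (ℂ × ℂ)) 0 ∧ ∀ᶠ w in 𝓝 0, Φ (G w) = w := by
  have hc : ContDiffAt ℂ ⊤ Φ 0 := hΦ.contDiffAt
  have hd' : HasFDerivAt Φ ((ContinuousLinearEquiv.refl ℂ (ℂ × ℂ) : (ℂ × ℂ) ≃L[ℂ] (ℂ × ℂ)) :
    (ℂ × ℂ) →L[ℂ] (ℂ × ℂ)) 0 := hd
  have hn : (⊤ : WithTop ℕ∞) ≠ 0 := by simp
  have hst := hc.hasStrictFDerivAt' hd' hn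
  refine ⟨hc.localInverse hd' hn, ?_, ?_, ?_, ?_⟩
  · have := hc.to_localInverse hd' hn
    rw [h0] at this
    exact this.analyticAt
  · have := hc.localInverse_apply_image hd' hn
    rwa [h0] at this
  · have := hst.to_localInverse.hasFDerivAt
    rw [h0] at this
    exact this
  · have := hst.eventually_right_inverse
    rw [h0] at this
    exact this

lemma sr_flow {r M : ℝ} {c : ℕ × ℕ → ℂ} (hc : Bd r M c) (w : ℂ × ℂ) (hw : ‖w‖ < r)
    (hd : DifferentiableAt ℂ (sr c) w) :
    HasSum (fun ij : ℕ × ℕ => ((ij.1 : ℂ) - ij.2) * tm c w ij)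
      (fderiv ℂ (sr c) w (w.1, -w.2)) := by
  obtain ⟨ρ, hwρ, hρr⟩ := exists_between hw
  have hρ : 0 ≤ ρ := (norm_nonneg w).trans hwρ.le
  have hr : 0 < r := hρ.trans_lt hρr
  let γ : ℂ → ℂ × ℂ := fun t => (w.1 * exp t, w.2 * exp (-t))
  have hγc : Continuous γ := by fun_prop
  have hγ0 : γ 0 = w := by simp [γ]
  have hγd : HasDerivAt γ (w.1, -w.2) 0 := by
    have h1 : HasDerivAt (fun t : ℂ => w.1 * exp t) (w.1) 0 := by
      simpa using (Complex.hasDerivAt_exp 0).const_mul w.1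
    have h2 : HasDerivAt (fun t : ℂ => w.2 * exp (-t)) (-w.2) 0 := by
      simpa using ((hasDerivAt_neg (0:ℂ)).cexp).const_mul w.2
    exact h1.prodMk h2
  let U : Set ℂ := {t | ‖γ t‖ < ρ}
  have hU : IsOpen U := isOpen_lt (by fun_prop) continuous_const
  have h0U : (0 : ℂ) ∈ U := by simp only [U, Set.mem_ofPred_eq, hγ0]; exact hwρ
  have hexp : ∀ (ij : ℕ × ℕ) (t : ℂ),
      tm c (γ t) ij = tm c w ij * exp (((ij.1 : ℂ) - ij.2) * t) := by
    intro ij t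
    simp only [tm, γ, mul_pow, ← exp_nat_mul]
    rw [show ((ij.1 : ℂ) - ij.2) * t = ij.1 * t + ij.2 * (-t) by ring, exp_add]
    ring
  have key := hasSum_deriv_of_summable_norm (F := fun ij t => tm c (γ t) ij) (z := 0)
    (geo_summable (M := M) hρ hρr) (fun ij => by
      simp only [hexp]; fun_prop) hU
    (fun ij t ht => tm_norm_le hr hc ((norm_fst_le _).trans (le_of_lt ht))
      ((norm_snd_le _).trans (le_of_lt ht)) ij) h0U
  have hL : deriv (fun t => ∑' ij, tm c (γ t) ij) 0 = fderiv ℂ (sr c) w (w.1, -w.2) := by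
    have h1 : HasFDerivAt (sr c) (fderiv ℂ (sr c) w) (γ 0) := by
      rw [hγ0]; exact hd.hasFDerivAt
    exact (h1.comp_hasDerivAt 0 hγd).deriv
  rw [hL] at key
  convert! key using 2 with ij
  simp only [hexp]
  have : HasDerivAt (fun t : ℂ => tm c w ij * exp (((ij.1 : ℂ) - ij.2) * t))
      (tm c w ij * (((ij.1 : ℂ) - ij.2))) 0 := by
    have h1 : HasDerivAt (fun t : ℂ => ((ij.1 : ℂ) - ij.2) * t) ((ij.1 : ℂ) - ij.2) 0 := by
      simpa using (hasDerivAt_id (0:ℂ)).const_mul ((ij.1 : ℂ) - ij.2)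
    simpa using h1.cexp.const_mul (tm c w ij)
  rw [this.deriv]; ring

lemma vey_eq (J : ℂ × ℂ → ℂ) (hJ : AnalyticAt ℂ J 0) (hJ0 : J 0 = 1) :
    ∃ (f : ℂ → ℂ) (u : ℂ × ℂ → ℂ), AnalyticAt ℂ f 0 ∧ f 0 = 1 ∧ AnalyticAt ℂ u 0 ∧ u 0 = 0 ∧
      ∀ᶠ w in 𝓝 (0 : ℂ × ℂ), f (w.1 * w.2) * (1 + fderiv ℂ u w (w.1, -w.2)) = J w := by
  obtain ⟨r, M, c, hr, hc, hs⟩ := exists_coeffs J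
    (hJ.eventually_analyticAt.mono fun w hw => hw.differentiableAt)
  have hM : 0 ≤ M := by
    have := hc (0, 0); simp at this; exact (norm_nonneg _).trans this
  let cD : ℕ × ℕ → ℂ := fun ij => if ij.2 = 0 then c (ij.1, ij.1) else 0
  have hcD : Bd (r ^ 2) M cD := by
    rintro ⟨i, j⟩
    by_cases hj : j = 0
    · have := hc (i, i)
      simp only [cD, hj, if_true]
      refine le_trans (le_of_eq ?_) this
      rw [← pow_mul]; congr 2; simp; ring
    · simpa [cD, hj] using hM
  let cv : ℕ × ℕ → ℂ := fun ij => if ij.1 = ij.2 then 0 else c ij / ((ij.1 : ℂ) - ij.2)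
  have hcv : Bd r M cv := by
    refine Bd_mono hr hc (fun ij => ?_) le_rfl
    by_cases hij : ij.1 = ij.2
    · simp [cv, hij]
    · simp only [cv, if_neg hij, norm_div]
      apply div_le_self (norm_nonneg _)
      have h1 : ((ij.1 : ℂ) - ij.2) = (((ij.1 : ℤ) - ij.2 : ℤ) : ℂ) := by push_cast; ring
      rw [h1, Complex.norm_intCast]
      have : (1 : ℤ) ≤ |(ij.1 : ℤ) - ij.2| := by
        apply Int.one_le_abs; omega
      exact_mod_cast this
  let f : ℂ → ℂ := fun t => sr cD (t, 0)
  have hf : AnalyticAt ℂ f 0 := by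
    apply AnalyticAt.comp (g := sr cD) (f := fun t : ℂ => (t, (0:ℂ)))
    · exact sr_analyticAt (by positivity) hcD
    · exact analyticAt_id.prod analyticAt_const
  have hv : AnalyticAt ℂ (sr cv) 0 := sr_analyticAt hr hcv
  have hfq : ∀ w : ℂ × ℂ, ‖w‖ < r →
      HasSum (fun ij : ℕ × ℕ => if ij.1 = ij.2 then tm c w ij else 0) (f (w.1 * w.2)) := by
    intro w hw
    have hw1 : ‖w.1‖ < r := (norm_fst_le w).trans_lt hw
    have hw2 : ‖w.2‖ < r := (norm_snd_le w).trans_lt hw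
    have hq : ‖((w.1 * w.2, 0) : ℂ × ℂ)‖ < r ^ 2 := by
      have : ‖w.1‖ * ‖w.2‖ < r ^ 2 := by
        rw [sq]; exact mul_lt_mul'' hw1 hw2 (norm_nonneg _) (norm_nonneg _)
      simpa [Prod.norm_def, hr] using this
    have h1 := (tm_summable hcD hq).hasSum
    have inj1 : Function.Injective (fun i : ℕ => (i, 0)) := fun i k h => by simpa using h
    have inj2 : Function.Injective (fun i : ℕ => (i, i)) := fun i k h => by simpa using h
    rw [← inj1.hasSum_iff] at h1
    · rw [← inj2.hasSum_iff]
      · have : ((fun ij : ℕ × ℕ => if ij.1 = ij.2 then tm c w ij else 0) ∘ fun i : ℕ => (i, i)) =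
            tm cD (w.1 * w.2, 0) ∘ fun i : ℕ => (i, 0) := by
          funext i
          simp [tm, cD, mul_pow, mul_assoc]
        rw [this]
        exact h1
      · rintro ⟨i, j⟩ hij
        rw [if_neg]
        rintro (h : i = j)
        exact hij ⟨i, by simp [h]⟩
    · rintro ⟨i, j⟩ hij
      have : j ≠ 0 := by
        rintro rfl
        exact hij ⟨i, rfl⟩
      simp [tm, cD, this]
  have hq : AnalyticAt ℂ (fun w : ℂ × ℂ => w.1 * w.2) 0 := analyticAt_fst.mul analyticAt_snd
  have hfqa : AnalyticAt ℂ (fun w : ℂ × ℂ => f (w.1 * w.2)) 0 := by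
    apply AnalyticAt.comp (g := f) (f := fun w : ℂ × ℂ => w.1 * w.2) _ hq
    simpa using hf
  have hmain : ∀ᶠ w in 𝓝 (0 : ℂ × ℂ),
      fderiv ℂ (sr cv) w (w.1, -w.2) = J w - f (w.1 * w.2) := by
    filter_upwards [ball_mem_nhds (0 : ℂ × ℂ) hr, hv.eventually_analyticAt] with w hw hva
    have hw : ‖w‖ < r := by simpa using hw
    refine (sr_flow hcv w hw hva.differentiableAt).unique ?_
    convert! (hs w hw).sub (hfq w hw) using 2 with ij
    by_cases hij : ij.1 = ij.2
    · simp [hij]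
    · have : ((ij.1 : ℂ) - ij.2) ≠ 0 := by
        rw [sub_ne_zero]; exact_mod_cast hij
      simp only [tm, cv, if_neg hij]
      field_simp
      ring
  have hf0 : f 0 = 1 := by
    have := hmain.self_of_nhds
    have hz : (((0 : ℂ × ℂ).1, -(0 : ℂ × ℂ).2) : ℂ × ℂ) = 0 := by simp
    rw [hz, map_zero, hJ0] at this
    simp only [Prod.fst_zero, mul_zero, Prod.snd_zero] at this
    linear_combination this
  have hv0 : sr cv 0 = 0 := by
    unfold sr
    convert! tsum_zero with ij
    obtain ⟨i, j⟩ := ij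
    by_cases hi : i = 0
    · by_cases hj : j = 0
      · simp [tm, cv, hi, hj]
      · simp [tm, hj]
    · simp [tm, hi]
  refine ⟨f, fun w => sr cv w / f (w.1 * w.2), hf, hf0, hv.div hfqa (by simp [hf0]),
    by simp [hv0], ?_⟩
  have hf' : ∀ᶠ w : ℂ × ℂ in 𝓝 0, AnalyticAt ℂ f (w.1 * w.2) := by
    have h1 : ContinuousAt (fun w : ℂ × ℂ => w.1 * w.2) 0 := hq.continuousAt
    apply h1.eventually
    simpa using hf.eventually_analyticAt
  filter_upwards [hmain, hv.eventually_analyticAt, hf',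
    hfqa.continuousAt.eventually_ne (y := 0) (by simp [hf0]),
    (hv.div hfqa (by simp [hf0])).eventually_analyticAt] with w h1 h2 h3 h4 h5
  have d1 := h2.differentiableAt.hasFDerivAt
  have d2 : HasFDerivAt (fun w : ℂ × ℂ => w.1 * w.2)
      (w.1 • ContinuousLinearMap.snd ℂ ℂ ℂ + w.2 • ContinuousLinearMap.fst ℂ ℂ ℂ) w :=
    (ContinuousLinearMap.fst ℂ ℂ ℂ).hasFDerivAt.mul (ContinuousLinearMap.snd ℂ ℂ ℂ).hasFDerivAt
  have d3 := h3.differentiableAt.hasDerivAt.comp_hasFDerivAt w d2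
  have d3' : HasFDerivAt (fun w : ℂ × ℂ => f (w.1 * w.2)) _ w := d3
  have hu : DifferentiableAt ℂ (fun w => sr cv w / f (w.1 * w.2)) w :=
    h5.differentiableAt
  have d4 := hu.hasFDerivAt.mul d3'
  have hev : sr cv =ᶠ[𝓝 w] (fun w => sr cv w / f (w.1 * w.2)) * (fun w => f (w.1 * w.2)) := by
    filter_upwards [d3'.continuousAt.eventually_ne h4] with z hz
    simp [div_mul_cancel₀ _ hz]
  have d5 := (d4.congr_of_eventuallyEq hev).unique d1
  have d6 := congrArg (fun L : ℂ × ℂ →L[ℂ] ℂ => L (w.1, -w.2)) d5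
  simp only [h1] at d6
  simp at d6
  linear_combination d6

noncomputable def dt (L : ℂ × ℂ →L[ℂ] ℂ × ℂ) : ℂ :=
  (L (1, 0)).1 * (L (0, 1)).2 - (L (0, 1)).1 * (L (1, 0)).2

lemma clm_eq (L : ℂ × ℂ →L[ℂ] ℂ × ℂ) (v : ℂ × ℂ) : L v = v.1 • L (1, 0) + v.2 • L (0, 1) := by
  rw [← map_smul, ← map_smul, ← map_add]; simp

lemma dt_comp (L N : ℂ × ℂ →L[ℂ] ℂ × ℂ) : dt (L.comp N) = dt L * dt N := by
  simp only [dt, ContinuousLinearMap.comp_apply]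
  rw [clm_eq L (N (1, 0)), clm_eq L (N (0, 1))]
  simp only [Prod.fst_add, Prod.snd_add, Prod.smul_fst, Prod.smul_snd, smul_eq_mul]
  ring

lemma dt_id : dt (ContinuousLinearMap.id ℂ (ℂ × ℂ)) = 1 := by simp [dt]

lemma dt_analytic (G : ℂ × ℂ → ℂ × ℂ) (hG : AnalyticAt ℂ G 0) :
    AnalyticAt ℂ (fun w => dt (fderiv ℂ G w)) 0 := by
  have h := hG.fderiv
  have ha : ∀ v : ℂ × ℂ, AnalyticAt ℂ (fun w => fderiv ℂ G w v) 0 := fun v =>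
    ((ContinuousLinearMap.apply ℂ (ℂ × ℂ) v).analyticAt _).comp h
  have h1 : ∀ v : ℂ × ℂ, AnalyticAt ℂ (fun w => (fderiv ℂ G w v).1) 0 := fun v =>
    ((ContinuousLinearMap.fst ℂ ℂ ℂ).analyticAt _).comp (ha v)
  have h2 : ∀ v : ℂ × ℂ, AnalyticAt ℂ (fun w => (fderiv ℂ G w v).2) 0 := fun v =>
    ((ContinuousLinearMap.snd ℂ ℂ ℂ).analyticAt _).comp (ha v)
  exact ((h1 _).mul (h2 _)).sub ((h1 _).mul (h2 _))

lemma normal_form (p : ℂ × ℂ → ℂ) (hp : ∀ᶠ w in 𝓝 (0 : ℂ × ℂ), DifferentiableAt ℂ p w)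
    (hO : (fun w : ℂ × ℂ => p w - w.1 * w.2) =O[𝓝 0] fun w : ℂ × ℂ => ‖w‖ ^ 3) :
    ∃ (F : ℂ × ℂ → ℂ × ℂ) (f : ℂ → ℂ), AnalyticAt ℂ F 0 ∧ F 0 = 0 ∧
      HasFDerivAt F (ContinuousLinearMap.id ℂ (ℂ × ℂ)) 0 ∧ AnalyticAt ℂ f 0 ∧ f 0 = 1 ∧
      ∀ᶠ w in 𝓝 (0 : ℂ × ℂ), p (F w) = w.1 * w.2 ∧ dt (fderiv ℂ F w) = f (w.1 * w.2) := by
  obtain ⟨Φ, hΦ, hΦ0, hΦd, hpΦ⟩ := exists_Phi p hp hO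
  obtain ⟨G, hG, hG0, hGd, hΦG⟩ := inv_germ Φ hΦ hΦ0 hΦd
  obtain ⟨f, u, hf, hf0, hu, hu0, hfu⟩ := vey_eq (fun w => dt (fderiv ℂ G w))
    (dt_analytic G hG) (by simp only [hGd.fderiv, dt_id])
  let K : ℂ × ℂ → ℂ × ℂ := fun w => (exp (u w) * w.1, exp (-u w) * w.2)
  have he1 : AnalyticAt ℂ (fun w => exp (u w)) 0 := by fun_prop
  have he2 : AnalyticAt ℂ (fun w => exp (-u w)) 0 := by fun_prop
  have hK : AnalyticAt ℂ K 0 := (he1.mul analyticAt_fst).prod (he2.mul analyticAt_snd)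
  have hK0 : K 0 = 0 := by simp [K]
  have hKd : HasFDerivAt K (ContinuousLinearMap.id ℂ (ℂ × ℂ)) 0 := by
    have h1 := hasFDerivAt_mul_lin _ he1 (ContinuousLinearMap.fst ℂ ℂ ℂ)
    have h2 := hasFDerivAt_mul_lin _ he2 (ContinuousLinearMap.snd ℂ ℂ ℂ)
    have := h1.prodMk h2
    convert! this using 1
    rw [hu0]
    ext <;> simp
  have hKq : ∀ w, (K w).1 * (K w).2 = w.1 * w.2 := by
    intro w
    have : exp (u w) * exp (-u w) = 1 := by rw [← exp_add]; simp
    simp only [K]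
    linear_combination (w.1 * w.2) * this
  have hKdt : ∀ᶠ w in 𝓝 (0 : ℂ × ℂ),
      dt (fderiv ℂ K w) = 1 + fderiv ℂ u w (w.1, -w.2) := by
    filter_upwards [hu.eventually_analyticAt] with w hw
    have d := hw.differentiableAt.hasFDerivAt
    have h1 := d.cexp.mul (ContinuousLinearMap.fst ℂ ℂ ℂ).hasFDerivAt
    have h2 := d.neg.cexp.mul (ContinuousLinearMap.snd ℂ ℂ ℂ).hasFDerivAt
    have h3 : HasFDerivAt K _ w := h1.prodMk h2
    have h4 : fderiv ℂ u w (w.1, -w.2) =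
        w.1 * fderiv ℂ u w (1, 0) - w.2 * fderiv ℂ u w (0, 1) := by
      have : ((w.1, -w.2) : ℂ × ℂ) = w.1 • ((1 : ℂ), (0 : ℂ)) - w.2 • ((0 : ℂ), (1 : ℂ)) := by
        simp
      rw [this, map_sub, map_smul, map_smul]; simp
    have : exp (u w) * exp (-u w) = 1 := by rw [← exp_add]; simp
    rw [h3.fderiv, h4]
    simp [dt]
    linear_combination (1 + w.1 * fderiv ℂ u w (1, 0) - w.2 * fderiv ℂ u w (0, 1)) * this
  obtain ⟨H, hH, hH0, hHd, hKH⟩ := inv_germ K hK hK0 hKd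
  have tH : Tendsto H (𝓝 0) (𝓝 0) := by
    have := hH.continuousAt.tendsto; rwa [hH0] at this
  have tG : Tendsto G (𝓝 0) (𝓝 0) := by
    have := hG.continuousAt.tendsto; rwa [hG0] at this
  have hqH : ∀ᶠ w in 𝓝 (0 : ℂ × ℂ), (H w).1 * (H w).2 = w.1 * w.2 := by
    filter_upwards [hKH] with w hw
    rw [← hKq (H w), hw]
  have hpG : ∀ᶠ w in 𝓝 (0 : ℂ × ℂ), p (G w) = w.1 * w.2 := by
    filter_upwards [tG.eventually hpΦ, hΦG] with w h1 h2
    rw [h1, h2]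
  refine ⟨G ∘ H, f, AnalyticAt.comp (by rwa [hH0]) hH, by simp [hH0, hG0], ?_, hf, hf0, ?_⟩
  · have h1 : HasFDerivAt G (ContinuousLinearMap.id ℂ (ℂ × ℂ)) (H 0) := by rwa [hH0]
    exact h1.comp 0 hHd
  · filter_upwards [hqH, tH.eventually hpG, tH.eventually hKdt, tH.eventually hfu,
      hH.eventually_analyticAt, tH.eventually hG.eventually_analyticAt,
      tH.eventually hK.eventually_analyticAt, hKH.eventually_nhds] with w h1 h2 h3 h4 h5 h6 h7 h8
    refine ⟨by simp only [Function.comp]; rw [h2, h1], ?_⟩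
    rw [fderiv_comp w h6.differentiableAt h5.differentiableAt, dt_comp, ← h4, ← h3, h1]
    have h9 : dt (fderiv ℂ K (H w)) * dt (fderiv ℂ H w) = 1 := by
      rw [← dt_comp, ← fderiv_comp w h7.differentiableAt h5.differentiableAt, ← dt_id]
      have : K ∘ H =ᶠ[𝓝 w] id := h8
      rw [this.fderiv_eq, fderiv_id]
    rw [mul_assoc, h9, mul_one]

lemma disc_ne (a b c : ℂ) (q : ℂ × ℂ → ℂ)
    (hq : ∀ w : ℂ × ℂ, q w = a * w.1 ^ 2 + b * w.1 * w.2 + c * w.2 ^ 2)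
    (hrange : {z : ℂ | ∃ x ξ : ℝ, q ((x : ℂ), (ξ : ℂ)) = z} ≠ Set.univ)
    (hnz : ∀ x ξ : ℝ, ¬(x = 0 ∧ ξ = 0) → q ((x : ℂ), (ξ : ℂ)) ≠ 0) :
    a ≠ 0 ∧ b ^ 2 - 4 * a * c ≠ 0 := by
  have ha : a ≠ 0 := by
    have := hnz 1 0 (by simp)
    simpa [hq] using this
  refine ⟨ha, fun hD => hrange ?_⟩
  have hsq : ∀ x y : ℂ, q (x, y) = a * (x + b / (2 * a) * y) ^ 2 := by
    intro x y
    rw [hq]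
    simp only
    field_simp
    linear_combination (-y ^ 2) * hD
  set s := b / (2 * a) with hs
  have him : s.im ≠ 0 := by
    intro him
    have hsr : (s.re : ℂ) = s := by apply Complex.ext <;> simp [him]
    apply hnz (-s.re) 1 (by simp)
    rw [hsq]
    push_cast
    rw [hsr]; ring
  ext z
  simp only [Set.mem_univ, iff_true]
  obtain ⟨o, ho⟩ := IsAlgClosed.exists_pow_nat_eq (z / a) (n := 2) (by norm_num)
  refine ⟨o.re - s.re * (o.im / s.im), o.im / s.im, ?_⟩
  rw [hsq]
  have : (((o.re - s.re * (o.im / s.im) : ℝ)) : ℂ) + s * ((o.im / s.im : ℝ) : ℂ) = o := by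
    apply Complex.ext
    · simp only [Complex.add_re, Complex.ofReal_re, Complex.mul_re, Complex.ofReal_im]; ring
    · simp only [Complex.add_im, Complex.ofReal_re, Complex.mul_im, Complex.ofReal_im]
      field_simp; ring
  rw [this, ho]
  field_simp

/-- Linear map of the plane with given matrix. -/
noncomputable def lin (α β γ δ : ℂ) : ℂ × ℂ →L[ℂ] ℂ × ℂ :=
  (α • ContinuousLinearMap.fst ℂ ℂ ℂ + β • ContinuousLinearMap.snd ℂ ℂ ℂ).prod
    (γ • ContinuousLinearMap.fst ℂ ℂ ℂ + δ • ContinuousLinearMap.snd ℂ ℂ ℂ)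

lemma lin_apply (α β γ δ : ℂ) (w : ℂ × ℂ) :
    lin α β γ δ w = (α * w.1 + β * w.2, γ * w.1 + δ * w.2) := rfl

lemma exists_lin (a b c : ℂ) (ha : a ≠ 0) (hD : b ^ 2 - 4 * a * c ≠ 0) :
    ∃ L N : ℂ × ℂ →L[ℂ] ℂ × ℂ, (∀ w, L (N w) = w) ∧ (∀ w, N (L w) = w) ∧
      ∀ w, (L w).1 * (L w).2 = a * w.1 ^ 2 + b * w.1 * w.2 + c * w.2 ^ 2 := by
  obtain ⟨d, hd⟩ := IsAlgClosed.exists_pow_nat_eq (b ^ 2 - 4 * a * c) (n := 2) (by norm_num)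
  have hd0 : d ≠ 0 := by rintro rfl; apply hD; rw [← hd]; simp
  refine ⟨lin a ((b - d) / 2) 1 ((b + d) / (2 * a)),
    lin ((b + d) / (2 * a) / d) (1 - (b + d) / (2 * d)) (-1 / d) (a / d), ?_, ?_, ?_⟩
  · rintro ⟨x, y⟩
    simp only [lin_apply, Prod.mk.injEq]
    constructor <;> (field_simp; ring)
  · rintro ⟨x, y⟩
    simp only [lin_apply, Prod.mk.injEq]
    constructor <;> (field_simp; ring)
  · rintro ⟨x, y⟩
    simp only [lin_apply]
    field_simp
    linear_combination (-y ^ 2) * hd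

lemma general_form (q p : ℂ × ℂ → ℂ) (L N : ℂ × ℂ →L[ℂ] ℂ × ℂ) (hLN : ∀ w, L (N w) = w)
    (hNL : ∀ w, N (L w) = w) (hqL : ∀ w, q w = (L w).1 * (L w).2)
    (hp : ∀ᶠ w in 𝓝 (0 : ℂ × ℂ), DifferentiableAt ℂ p w)
    (hO : (fun w : ℂ × ℂ => p w - q w) =O[𝓝 0] fun w : ℂ × ℂ => ‖w‖ ^ 3) :
    ∃ (F : ℂ × ℂ → ℂ × ℂ) (f : ℂ → ℂ), AnalyticAt ℂ F 0 ∧ F 0 = 0 ∧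
      HasFDerivAt F (ContinuousLinearMap.id ℂ (ℂ × ℂ)) 0 ∧ AnalyticAt ℂ f 0 ∧ f 0 = 1 ∧
      ∀ᶠ w in 𝓝 (0 : ℂ × ℂ), p (F w) = q w ∧ dt (fderiv ℂ F w) = f (q w) := by
  have tN : Tendsto N (𝓝 0) (𝓝 0) := by simpa using N.continuous.tendsto 0
  have tL : Tendsto L (𝓝 0) (𝓝 0) := by simpa using L.continuous.tendsto 0
  have hcomp : N.comp L = ContinuousLinearMap.id ℂ (ℂ × ℂ) := by
    apply ContinuousLinearMap.ext; intro w; simp [hNL]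
  have hdt : dt N * dt L = 1 := by
    rw [← dt_comp, hcomp, dt_id]
  obtain ⟨F, f, hF, hF0, hFd, hf, hf0, h⟩ := normal_form (p ∘ N) (by
      filter_upwards [tN.eventually hp] with w hw
      exact hw.comp w N.differentiableAt) (by
      have h1 := hO.comp_tendsto tN
      have h2 : (fun w : ℂ × ℂ => ‖N w‖ ^ 3) =O[𝓝 0] fun w : ℂ × ℂ => ‖w‖ ^ 3 :=
        ((N.isBigO_id _).norm_norm).pow 3
      refine IsBigO.trans ?_ h2
      refine h1.congr_left (fun w => ?_)
      simp [hqL, hLN])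
  refine ⟨fun w => N (F (L w)), f, ?_, by simp [hF0], ?_, hf, hf0, ?_⟩
  · have h1 : AnalyticAt ℂ F (L 0) := by simpa using hF
    exact (N.analyticAt _).comp (h1.comp (L.analyticAt 0))
  · have h1 : HasFDerivAt F (ContinuousLinearMap.id ℂ (ℂ × ℂ)) (L 0) := by simpa using hFd
    have := N.hasFDerivAt.comp (0 : ℂ × ℂ) (h1.comp (0 : ℂ × ℂ) L.hasFDerivAt)
    rw [ContinuousLinearMap.id_comp, hcomp] at this
    exact this
  · filter_upwards [tL.eventually h, tL.eventually hF.eventually_analyticAt] with w h1 h2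
    refine ⟨by rw [hqL]; exact h1.1, ?_⟩
    have h3 := N.hasFDerivAt.comp w (h2.differentiableAt.hasFDerivAt.comp w L.hasFDerivAt)
    have h4 : fderiv ℂ (fun w => N (F (L w))) w = N.comp ((fderiv ℂ F (L w)).comp L) := h3.fderiv
    rw [h4, dt_comp, dt_comp, h1.2, hqL]
    linear_combination (f ((L w).1 * (L w).2)) * hdt

end Vey


/-- Vey's Morse lemma in dimension two. -/
theorem stmt0
    (m : ℝ) (hm : 0 < m)
    (a b c : ℂ) (q : ℂ × ℂ → ℂ)
    (hq : ∀ w : ℂ × ℂ, q w = a * w.1 ^ 2 + b * w.1 * w.2 + c * w.2 ^ 2)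
    (hrange : {z : ℂ | ∃ x ξ : ℝ, q ((x : ℂ), (ξ : ℂ)) = z} ≠ Set.univ)
    (hnz : ∀ x ξ : ℝ, ¬(x = 0 ∧ ξ = 0) → q ((x : ℂ), (ξ : ℂ)) ≠ 0)
    (U : Set (ℂ × ℂ)) (hU : IsOpen U) (h0U : (0 : ℂ × ℂ) ∈ U)
    (p : ℂ × ℂ → ℂ) (hp : DifferentiableOn ℂ p U)
    (hpq : Asymptotics.IsBigO (nhds (0 : ℂ × ℂ))
      (fun w : ℂ × ℂ => p w - q w) (fun w : ℂ × ℂ => ‖w‖ ^ 3)) :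
    ∃ (ε : ℝ) (F : ℂ × ℂ → ℂ × ℂ) (Vf : Set ℂ) (f : ℂ → ℂ),
      0 < ε ∧
      DifferentiableOn ℂ F (Metric.ball (0 : ℂ × ℂ) ε) ∧
      Set.MapsTo F (Metric.ball (0 : ℂ × ℂ) ε) U ∧
      F 0 = 0 ∧
      fderiv ℂ F 0 = ContinuousLinearMap.id ℂ (ℂ × ℂ) ∧
      IsOpen Vf ∧ (0 : ℂ) ∈ Vf ∧
      DifferentiableOn ℂ f Vf ∧ f 0 = 1 ∧
      ∀ w ∈ Metric.ball (0 : ℂ × ℂ) ε,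
        p (F w) = q w ∧
        q w ∈ Vf ∧
        (fderiv ℂ F w (1, 0)).1 * (fderiv ℂ F w (0, 1)).2
          - (fderiv ℂ F w (0, 1)).1 * (fderiv ℂ F w (1, 0)).2 = f (q w) := by

  obtain ⟨ha, hD⟩ := Vey.disc_ne a b c q hq hrange hnz
  obtain ⟨L, N, hLN, hNL, hL⟩ := Vey.exists_lin a b c ha hD
  obtain ⟨F, f, hF, hF0, hFd, hf, hf0, h⟩ := Vey.general_form q p L N hLN hNL
    (fun w => by rw [hq, hL]) (by
      filter_upwards [hU.mem_nhds h0U] with w hw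
      exact (hp w hw).differentiableAt (hU.mem_nhds hw)) hpq
  have hq0 : q 0 = 0 := by simp [hq]
  have hqc : Continuous q := by
    have : q = fun w : ℂ × ℂ => a * w.1 ^ 2 + b * w.1 * w.2 + c * w.2 ^ 2 := funext hq
    rw [this]; fun_prop
  have hV : IsOpen {z | AnalyticAt ℂ f z} := isOpen_analyticAt ℂ f
  have e1 : ∀ᶠ w in nhds (0 : ℂ × ℂ), F w ∈ U :=
    hF.continuousAt.eventually (by rw [hF0]; exact hU.mem_nhds h0U)
  have e2 : ∀ᶠ w in nhds (0 : ℂ × ℂ), AnalyticAt ℂ f (q w) :=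
    hqc.continuousAt.eventually (by rw [hq0]; exact hf.eventually_analyticAt)
  obtain ⟨ε, hε, H⟩ := Metric.eventually_nhds_iff_ball.1
    (((h.and e1).and e2).and hF.eventually_analyticAt)
  refine ⟨ε, F, {z | AnalyticAt ℂ f z}, f, hε, ?_, ?_, hF0, hFd.fderiv, hV, hf, ?_, hf0, ?_⟩
  · intro w hw
    exact (H w hw).2.differentiableAt.differentiableWithinAt
  · intro w hw
    exact (H w hw).1.1.2
  · intro z hz
    exact AnalyticAt.differentiableWithinAt hz
  · intro w hw
    exact ⟨(H w hw).1.1.1.1, (H w hw).1.2, (H w hw).1.1.1.2⟩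
end

section
/- There is an absolute constant K > 0 with the following property. Let δ > 0 and let r be a holomorphic function on an open subset of ℂ² containing the closed polydisc {(z,ζ) ∈ ℂ² : |z| ≤ δ, |ζ| ≤ δ}. Then there exist a function a holomorphic on the open polydisc Ω(δ) = {(z,ζ) : |z| < δ, |ζ| < δ} and a function r₀ holomorphic on the disc D(0,δ²) ⊆ ℂ such that for all (z,ζ) ∈ Ω(δ): i·(z·∂a/∂z(z,ζ) − ζ·∂a/∂ζ(z,ζ)) = −r(z,ζ) + r₀(z·ζ), and moreover sup_{Ω(δ)} |a| ≤ K·sup_{Ω(δ)} |r| and sup_{D(0,δ²)} |r₀| ≤ K·sup_{Ω(δ)} |r|. -/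
open Complex Metric

noncomputable def rot (t : ℝ) : ℂ × ℂ →L[ℂ] ℂ × ℂ :=
  cexp (t * I) • (ContinuousLinearMap.inl ℂ ℂ ℂ).comp (ContinuousLinearMap.fst ℂ ℂ ℂ) +
    cexp (-(t * I)) • (ContinuousLinearMap.inr ℂ ℂ ℂ).comp (ContinuousLinearMap.snd ℂ ℂ ℂ)

lemma rot_apply (t : ℝ) (p : ℂ × ℂ) : rot t p = (cexp (t * I) * p.1, cexp (-(t * I)) * p.2) := by
  simp [rot]

lemma norm_exp_neg_aux (t : ℝ) : ‖cexp (-(t * I))‖ = 1 := by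
  have := norm_exp_ofReal_mul_I (-t)
  simpa using this

lemma rot_norm (t : ℝ) (p : ℂ × ℂ) : ‖rot t p‖ = ‖p‖ := by
  rw [rot_apply, Prod.norm_def, Prod.norm_def]
  simp only [norm_mul, norm_exp_ofReal_mul_I, norm_exp_neg_aux, one_mul]

lemma rot_opNorm (t : ℝ) : ‖rot t‖ ≤ 1 :=
  ContinuousLinearMap.opNorm_le_bound _ zero_le_one fun p => by rw [rot_norm, one_mul]

lemma rot_continuous : Continuous rot := by
  unfold rot
  fun_prop

lemma rot_mem {R : ℝ} {p : ℂ × ℂ} (hp : p ∈ ball (0 : ℂ × ℂ) R) (t : ℝ) :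
    rot t p ∈ ball (0 : ℂ × ℂ) R := by
  rw [mem_ball_zero_iff] at *
  rwa [rot_norm]

lemma rot_orbit_cont {R : ℝ} {r : ℂ × ℂ → ℂ} (hr : DifferentiableOn ℂ r (ball 0 R))
    {p : ℂ × ℂ} (hp : p ∈ ball (0 : ℂ × ℂ) R) : Continuous fun t => r (rot t p) := by
  refine hr.continuousOn.comp_continuous ?_ (rot_mem hp)
  exact rot_continuous.clm_apply continuous_const

lemma fderiv_bound {R R1 : ℝ} {r : ℂ × ℂ → ℂ} (hr : DifferentiableOn ℂ r (ball 0 R)) (h1 : R1 < R) :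
    ∃ B : ℝ, ∀ q ∈ ball (0 : ℂ × ℂ) R1, ‖fderiv ℂ r q‖ ≤ B := by
  set R2 := (R1 + R) / 2 with hR2
  have hsub : closedBall (0 : ℂ × ℂ) R2 ⊆ ball 0 R := closedBall_subset_ball (by linarith)
  obtain ⟨M, hM⟩ := (isCompact_closedBall (0 : ℂ × ℂ) R2).exists_bound_of_continuousOn
    (hr.continuousOn.mono hsub)
  have hsub2 : ∀ q ∈ ball (0 : ℂ × ℂ) R1, ball q (R2 - R1) ⊆ closedBall 0 R2 := by
    intro q hq x hx
    rw [mem_ball] at hq hx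
    rw [mem_closedBall]
    linarith [dist_triangle x q 0]
  refine ⟨(M + M) / (R2 - R1), fun q hq => ?_⟩
  have hpos : 0 < R2 - R1 := by linarith
  refine norm_fderiv_le_div_of_mapsTo_ball (hr.mono ((hsub2 q hq).trans hsub)) ?_ hpos
  intro x hx
  rw [mem_closedBall, dist_eq_norm]
  exact (norm_sub_le _ _).trans (add_le_add (hM _ (hsub2 q hq hx))
    (hM _ (hsub2 q hq (mem_ball_self hpos))))

lemma fderiv_orbit_meas (r : ℂ × ℂ → ℂ) (c : ℝ → ℂ) (hc : Continuous c) (p : ℂ × ℂ) :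
    MeasureTheory.StronglyMeasurable fun t => c t • (fderiv ℂ r (rot t p)).comp (rot t) := by
  have h1 : MeasureTheory.StronglyMeasurable fun t => fderiv ℂ r (rot t p) :=
    ((measurable_fderiv ℂ r).comp
      (rot_continuous.clm_apply continuous_const).measurable).stronglyMeasurable
  have h2 : MeasureTheory.StronglyMeasurable fun t => (fderiv ℂ r (rot t p)).comp (rot t) := by
    have hcont : Continuous fun x : (ℂ × ℂ →L[ℂ] ℂ) × (ℂ × ℂ →L[ℂ] ℂ × ℂ) => x.1.comp x.2 := by
      fun_prop
    exact hcont.comp_stronglyMeasurable (h1.prodMk rot_continuous.stronglyMeasurable)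
  exact hc.stronglyMeasurable.smul h2

lemma key_int {R : ℝ} {r : ℂ × ℂ → ℂ} (hr : DifferentiableOn ℂ r (ball 0 R))
    (c : ℝ → ℂ) (hc : Continuous c) {p : ℂ × ℂ} (hp : p ∈ ball (0 : ℂ × ℂ) R) (a b : ℝ) :
    IntervalIntegrable (fun t => c t • (fderiv ℂ r (rot t p)).comp (rot t))
      MeasureTheory.volume a b ∧
    HasFDerivAt (fun q => ∫ t in a..b, c t * r (rot t q))
      (∫ t in a..b, c t • (fderiv ℂ r (rot t p)).comp (rot t)) p := by
  obtain ⟨R1, hpR1, hR1⟩ := exists_between (mem_ball_zero_iff.1 hp)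
  obtain ⟨B, hB⟩ := fderiv_bound hr hR1
  have hpB : p ∈ ball (0 : ℂ × ℂ) R1 := mem_ball_zero_iff.2 hpR1
  have hsub : ball (0 : ℂ × ℂ) R1 ⊆ ball 0 R := ball_subset_ball hR1.le
  have hbd : ∀ t, ∀ x ∈ ball (0 : ℂ × ℂ) R1,
      ‖c t • (fderiv ℂ r (rot t x)).comp (rot t)‖ ≤ ‖c t‖ * B := by
    intro t x hx
    rw [norm_smul]
    gcongr
    refine (ContinuousLinearMap.opNorm_comp_le _ _).trans ?_
    calc _ ≤ ‖fderiv ℂ r (rot t x)‖ * 1 := by gcongr; exact rot_opNorm t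
      _ ≤ B := by rw [mul_one]; exact hB _ (rot_mem hx t)
  have hbi : IntervalIntegrable (fun t => ‖c t‖ * B) MeasureTheory.volume a b :=
    (hc.norm.mul continuous_const).intervalIntegrable _ _
  have hFc : ∀ x ∈ ball (0 : ℂ × ℂ) R1, Continuous fun t => c t * r (rot t x) :=
    fun x hx => hc.mul (rot_orbit_cont hr (hsub hx))
  refine ⟨hbi.mono_fun' (fderiv_orbit_meas r c hc p).aestronglyMeasurable
    (Filter.Eventually.of_forall fun t => hbd t p hpB), ?_⟩
  refine intervalIntegral.hasFDerivAt_integral_of_dominated_of_fderiv_le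
    (F := fun q t => c t * r (rot t q))
    (F' := fun q t => c t • (fderiv ℂ r (rot t q)).comp (rot t))
    (bound := fun t => ‖c t‖ * B) (isOpen_ball.mem_nhds hpB) ?_ ?_ ?_ ?_ hbi ?_
  · filter_upwards [isOpen_ball.mem_nhds hpB] with x hx
    exact (hFc x hx).aestronglyMeasurable
  · exact (hFc p hpB).intervalIntegrable _ _
  · exact (fderiv_orbit_meas r c hc p).aestronglyMeasurable
  · exact Filter.Eventually.of_forall fun t _ x hx => hbd t x hx
  · refine Filter.Eventually.of_forall fun t _ x hx => ?_
    have h1 : HasFDerivAt r (fderiv ℂ r (rot t x)) (rot t x) :=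
      (hr.differentiableAt (isOpen_ball.mem_nhds (rot_mem (hsub hx) t))).hasFDerivAt
    exact (h1.comp x (rot t).hasFDerivAt).const_mul (c t)

lemma rot_orbit_deriv {R : ℝ} {r : ℂ × ℂ → ℂ} (hr : DifferentiableOn ℂ r (ball 0 R))
    {z ζ : ℂ} (hp : (z, ζ) ∈ ball (0 : ℂ × ℂ) R) (t : ℝ) :
    HasDerivAt (fun t : ℝ => r (rot t (z, ζ)))
      (fderiv ℂ r (rot t (z, ζ)) (rot t (I * z, -(I * ζ)))) t := by
  have h1 : HasFDerivAt r (fderiv ℂ r (rot t (z, ζ))) (rot t (z, ζ)) :=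
      (hr.differentiableAt (isOpen_ball.mem_nhds (rot_mem hp t))).hasFDerivAt
  refine (h1.restrictScalars ℝ).comp_hasDerivAt t (f := fun t => rot t (z, ζ)) ?_
  simp only [rot_apply]
  have ht : HasDerivAt (fun t : ℝ => (t : ℂ) * I) I t := by
    simpa using (Complex.ofRealCLM.hasDerivAt (x := t)).mul_const I
  have h2 := ht.cexp.mul_const z
  have h3 := ht.neg.cexp.mul_const ζ
  have e : (cexp (t * I) * (I * z), cexp (-(t * I)) * -(I * ζ)) =
      (cexp (t * I) * I * z, cexp (-(t * I)) * -I * ζ) := by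
    ext <;> simp <;> ring
  rw [e]
  exact h2.prodMk h3

/-- the equation -/
lemma eqn {R : ℝ} {r : ℂ × ℂ → ℂ} (hr : DifferentiableOn ℂ r (ball 0 R))
    {z ζ : ℂ} (hp : (z, ζ) ∈ ball (0 : ℂ × ℂ) R) :
    (∫ t in (0 : ℝ)..2 * Real.pi, (t : ℂ) • (fderiv ℂ r (rot t (z, ζ))).comp (rot t))
      (I * z, -(I * ζ)) =
    2 * Real.pi * r (z, ζ) - ∫ t in (0 : ℝ)..2 * Real.pi, r (rot t (z, ζ)) := by
  have hi := (key_int hr (fun t => (t : ℂ)) Complex.continuous_ofReal hp 0 (2 * Real.pi)).1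
  have hi1 := (key_int hr (fun _ => 1) continuous_const hp 0 (2 * Real.pi)).1
  rw [ContinuousLinearMap.intervalIntegral_apply hi]
  have := intervalIntegral.integral_mul_deriv_eq_deriv_mul (a := 0) (b := 2 * Real.pi)
    (u := fun t : ℝ => (t : ℂ)) (u' := fun _ => 1) (v := fun t : ℝ => r (rot t (z, ζ)))
    (v' := fun t => fderiv ℂ r (rot t (z, ζ)) (rot t (I * z, -(I * ζ))))
    (fun t _ => by simpa using (hasDerivAt_id t).ofReal_comp)
    (fun t _ => rot_orbit_deriv hr hp t) (by simp) ?_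
  · simp only [smul_apply, ContinuousLinearMap.comp_apply, smul_eq_mul]
    rw [this]
    have e : rot (2 * Real.pi) (z, ζ) = (z, ζ) := by
      rw [rot_apply]
      simp [Complex.exp_neg]
    simp [e]
  · have h1 := hi1.1.apply_continuousLinearMap ((I * z, -(I * ζ)) : ℂ × ℂ)
    have h2 := hi1.2.apply_continuousLinearMap ((I * z, -(I * ζ)) : ℂ × ℂ)
    exact ⟨by simpa [MeasureTheory.IntegrableOn] using h1,
      by simpa [MeasureTheory.IntegrableOn] using h2⟩

/-- average depends on zζ only -/
lemma avg_eq {R δ : ℝ} (hδ : 0 < δ) (hδR : δ < R) {r : ℂ × ℂ → ℂ}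
    (hr : DifferentiableOn ℂ r (ball 0 R))
    {z ζ : ℂ} (hz : z ∈ ball (0 : ℂ) δ) (hζ : ζ ∈ ball (0 : ℂ) δ) (hz0 : z ≠ 0) :
    ∫ t in (0 : ℝ)..2 * Real.pi, r (rot t (z, ζ)) =
      ∫ t in (0 : ℝ)..2 * Real.pi, r (rot t ((δ : ℂ), z * ζ / δ)) := by
  set w := z * ζ with hw
  set f : ℂ → ℂ := fun u => r (u, w / u) with hf
  have hzn : 0 < ‖z‖ := norm_pos_iff.2 hz0
  rw [mem_ball_zero_iff] at hz hζ
  have key : ∀ ρ : ℝ, 0 < ρ → (∮ u in C(0, ρ), (u - 0)⁻¹ • f u) =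
      I * ∫ t in (0 : ℝ)..2 * Real.pi, r (rot t ((ρ : ℂ), w / ρ)) := by
    intro ρ hρ
    rw [circleIntegral, ← intervalIntegral.integral_const_mul]
    refine intervalIntegral.integral_congr fun t _ => ?_
    have : (ρ : ℂ) ≠ 0 := by exact_mod_cast hρ.ne'
    have h3 := Complex.exp_ne_zero (t * I)
    simp only [deriv_circleMap, circleMap, hf, rot_apply, smul_eq_mul, zero_add, sub_zero,
      Complex.exp_neg]
    rw [mul_comm (cexp (t * I)) (ρ : ℂ)]
    have e : w / (ρ * cexp (t * I)) = (cexp (t * I))⁻¹ * (w / ρ) := by field_simp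
    rw [e]
    field_simp
  have hd : ∀ u ∈ closedBall (0 : ℂ) δ \ ball 0 ‖z‖, DifferentiableAt ℂ f u := by
    intro u hu
    have h1 : ‖u‖ ≤ δ := by simpa using hu.1
    have h2 : ‖z‖ ≤ ‖u‖ := by simpa using hu.2
    have hu0 : u ≠ 0 := norm_pos_iff.1 (hzn.trans_le h2)
    have hm : (u, w / u) ∈ ball (0 : ℂ × ℂ) R := by
      rw [mem_ball_zero_iff, Prod.norm_def]
      refine max_lt (h1.trans_lt hδR) (lt_trans ?_ hδR)
      rw [norm_div, div_lt_iff₀ (hzn.trans_le h2), hw, norm_mul]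
      nlinarith [norm_nonneg ζ]
    refine DifferentiableAt.comp u (hr.differentiableAt (isOpen_ball.mem_nhds hm)) ?_
    exact differentiableAt_id.prodMk ((differentiableAt_const w).div differentiableAt_id hu0)
  have hann := circleIntegral_sub_center_inv_smul_eq_of_differentiable_on_annulus_off_countable
    (c := 0) hzn hz.le (f := f) Set.countable_empty
    (fun u hu => (hd u hu).continuousAt.continuousWithinAt)
    (fun u hu => hd u ⟨ball_subset_closedBall hu.1.1, fun h => hu.1.2 (ball_subset_closedBall h)⟩)
  rw [key δ hδ, key _ hzn] at hann
  rw [mul_left_cancel₀ I_ne_zero hann]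
  -- rotation
  set g : ℝ → ℂ := fun t => r (rot t ((‖z‖ : ℂ), w / ‖z‖)) with hg
  have hper : Function.Periodic g (2 * Real.pi) := by
    intro t
    simp only [hg, rot_apply]
    have : cexp (((t + 2 * Real.pi : ℝ) : ℂ) * I) = cexp (t * I) := by
      push_cast
      rw [add_mul, Complex.exp_add, Complex.exp_two_pi_mul_I, mul_one]
    rw [Complex.exp_neg, this, Complex.exp_neg]
  have hshift : ∀ t : ℝ, r (rot t (z, ζ)) = g (t + z.arg) := by
    intro t
    have hzz : (‖z‖ : ℂ) * cexp (z.arg * I) = z := Complex.norm_mul_exp_arg_mul_I z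
    have hn : (‖z‖ : ℂ) ≠ 0 := by exact_mod_cast hzn.ne'
    have h3 := Complex.exp_ne_zero (z.arg * I)
    have h4 := Complex.exp_ne_zero (t * I)
    simp only [hg, rot_apply, Complex.exp_neg]
    push_cast
    rw [add_mul, Complex.exp_add]
    congr 2
    · rw [mul_assoc, mul_comm (cexp (z.arg * I)), hzz]
    · have hw' : w = (‖z‖ : ℂ) * cexp (z.arg * I) * ζ := by rw [hzz]
      rw [hw']
      field_simp
  simp only [hshift]
  rw [intervalIntegral.integral_comp_add_right g]
  have := hper.intervalIntegral_add_eq z.arg 0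
  rw [zero_add] at this ⊢
  rw [add_comm, this]

/-- Solution of the averaging (cohomological) equation
i(z∂_z − ζ∂_ζ)a = −r + r₀(zζ) on a polydisc, with uniform bounds given by an
absolute constant K. -/
theorem stmt3 :
    ∃ K : ℝ, 0 < K ∧
      ∀ δ : ℝ, 0 < δ →
      ∀ U : Set (ℂ × ℂ), IsOpen U →
        (Metric.closedBall (0 : ℂ) δ ×ˢ Metric.closedBall (0 : ℂ) δ) ⊆ U →
      ∀ r : ℂ × ℂ → ℂ, DifferentiableOn ℂ r U →
      ∃ (a : ℂ × ℂ → ℂ) (r₀ : ℂ → ℂ),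
        DifferentiableOn ℂ a (Metric.ball (0 : ℂ) δ ×ˢ Metric.ball (0 : ℂ) δ) ∧
        DifferentiableOn ℂ r₀ (Metric.ball (0 : ℂ) (δ ^ 2)) ∧
        (∀ z ζ : ℂ, z ∈ Metric.ball (0 : ℂ) δ → ζ ∈ Metric.ball (0 : ℂ) δ →
          Complex.I * (z * deriv (fun w => a (w, ζ)) z - ζ * deriv (fun w => a (z, w)) ζ)
            = - r (z, ζ) + r₀ (z * ζ)) ∧
        (∀ z ζ : ℂ, z ∈ Metric.ball (0 : ℂ) δ → ζ ∈ Metric.ball (0 : ℂ) δ →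
          ‖a (z, ζ)‖ ≤
            K * sSup ((fun w => ‖r w‖) '' (Metric.ball (0 : ℂ) δ ×ˢ Metric.ball (0 : ℂ) δ))) ∧
        (∀ w ∈ Metric.ball (0 : ℂ) (δ ^ 2),
          ‖r₀ w‖ ≤
            K * sSup ((fun w => ‖r w‖) '' (Metric.ball (0 : ℂ) δ ×ˢ Metric.ball (0 : ℂ) δ))) := by
  refine ⟨2 * Real.pi, by positivity, ?_⟩
  intro δ hδ U hU hsub r hr
  have hpi : 0 < 2 * Real.pi := by positivity
  have hpiC : (2 * Real.pi : ℂ) ≠ 0 := by exact_mod_cast hpi.ne'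
  have hδC : (δ : ℂ) ≠ 0 := by exact_mod_cast hδ.ne'
  have hb : ball (0 : ℂ) δ ×ˢ ball (0 : ℂ) δ = ball (0 : ℂ × ℂ) δ := ball_prod_same _ _ _
  have hcb : closedBall (0 : ℂ) δ ×ˢ closedBall (0 : ℂ) δ = closedBall (0 : ℂ × ℂ) δ :=
    closedBall_prod_same _ _ _
  rw [hcb] at hsub
  rw [hb]
  obtain ⟨ε, hε, hεU⟩ := (isCompact_closedBall (0 : ℂ × ℂ) δ).exists_thickening_subset_open hU hsub
  rw [thickening_closedBall hε hδ.le] at hεU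
  set R := ε + δ with hR
  have hδR : δ < R := by linarith
  have hrR : DifferentiableOn ℂ r (ball 0 R) := hr.mono hεU
  have hcR : closedBall (0 : ℂ × ℂ) δ ⊆ ball 0 R := closedBall_subset_ball hδR
  have hmem : ∀ z ζ : ℂ, z ∈ ball (0 : ℂ) δ → ζ ∈ ball (0 : ℂ) δ →
      (z, ζ) ∈ ball (0 : ℂ × ℂ) δ := by
    intro z ζ hz hζ
    rw [← hb]
    exact ⟨hz, hζ⟩
  set S := sSup ((fun w => ‖r w‖) '' ball (0 : ℂ × ℂ) δ) with hS
  have hbdd : BddAbove ((fun w => ‖r w‖) '' ball (0 : ℂ × ℂ) δ) :=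
    ((isCompact_closedBall (0 : ℂ × ℂ) δ).bddAbove_image
      (hrR.continuousOn.mono hcR).norm).mono (Set.image_mono ball_subset_closedBall)
  have hSb : ∀ q ∈ closedBall (0 : ℂ × ℂ) δ, ‖r q‖ ≤ S := by
    rw [← closure_ball (0 : ℂ × ℂ) hδ.ne']
    refine fun q hq => le_on_closure (f := fun q => ‖r q‖) (g := fun _ => S) ?_ ?_
      continuousOn_const hq
    · intro x hx
      exact le_csSup hbdd ⟨x, hx, rfl⟩
    · rw [closure_ball (0 : ℂ × ℂ) hδ.ne']
      exact (hrR.continuousOn.mono hcR).norm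
  have hS0 : 0 ≤ S := (norm_nonneg _).trans (hSb 0 (by simp [hδ.le]))
  have hSrot : ∀ q ∈ closedBall (0 : ℂ × ℂ) δ, ∀ t, ‖r (rot t q)‖ ≤ S := by
    intro q hq t
    refine hSb _ ?_
    rw [mem_closedBall_zero_iff] at *
    rwa [rot_norm]
  set A : ℂ × ℂ → ℂ := fun q => ∫ t in (0 : ℝ)..2 * Real.pi, r (rot t q) with hA
  set T : ℂ × ℂ → ℂ := fun q => ∫ t in (0 : ℝ)..2 * Real.pi, (t : ℂ) * r (rot t q) with hT
  have hAd : ∀ q ∈ ball (0 : ℂ × ℂ) R, DifferentiableAt ℂ A q := by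
    intro q hq
    have := (key_int hrR (fun _ => 1) continuous_const hq 0 (2 * Real.pi)).2.differentiableAt
    simpa only [one_mul] using this
  have hTd := fun q (hq : q ∈ ball (0 : ℂ × ℂ) R) =>
    (key_int hrR (fun t => (t : ℂ)) Complex.continuous_ofReal hq 0 (2 * Real.pi)).2
  have hwm : ∀ w ∈ ball (0 : ℂ) (δ ^ 2), ((δ : ℂ), w / δ) ∈ closedBall (0 : ℂ × ℂ) δ := by
    intro w hw
    rw [mem_ball_zero_iff] at hw
    rw [mem_closedBall_zero_iff, Prod.norm_def]
    have hn : ‖(δ : ℂ)‖ = δ := by simp [abs_of_pos hδ]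
    refine max_le hn.le ?_
    rw [norm_div, hn, div_le_iff₀ hδ]
    nlinarith
  have hmul : ∀ z ζ : ℂ, z ∈ ball (0 : ℂ) δ → ζ ∈ ball (0 : ℂ) δ → z * ζ ∈ ball (0 : ℂ) (δ ^ 2) := by
    intro z ζ hz hζ
    rw [mem_ball_zero_iff] at *
    rw [norm_mul]
    nlinarith [norm_nonneg z, norm_nonneg ζ]
  have hBd : ∀ w ∈ ball (0 : ℂ) (δ ^ 2), DifferentiableAt ℂ (fun w => A ((δ : ℂ), w / δ)) w := by
    intro w hw
    refine DifferentiableAt.comp w (hAd _ (hcR (hwm w hw))) ?_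
    exact (differentiableAt_const _).prodMk (differentiableAt_id.div_const _)
  have hAeq : ∀ z ζ : ℂ, z ∈ ball (0 : ℂ) δ → ζ ∈ ball (0 : ℂ) δ →
      A (z, ζ) = A ((δ : ℂ), z * ζ / δ) := by
    intro z ζ hz hζ
    by_cases hz0 : z = 0
    · subst hz0
      have c1 : ContinuousAt (fun z => A (z, ζ)) 0 :=
        ContinuousAt.comp (f := fun z : ℂ => (z, ζ))
          (hAd _ (hcR (ball_subset_closedBall (hmem _ _ hz hζ)))).continuousAt (by fun_prop)
      have c2 : ContinuousAt (fun z => A ((δ : ℂ), z * ζ / δ)) 0 :=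
        ContinuousAt.comp (f := fun z : ℂ => z * ζ) (g := fun w => A ((δ : ℂ), w / δ))
          (hBd _ (hmul _ _ hz hζ)).continuousAt (by fun_prop)
      refine tendsto_nhds_unique_of_eventuallyEq (c1.tendsto.mono_left nhdsWithin_le_nhds)
        (c2.tendsto.mono_left (nhdsWithin_le_nhds (s := {0}ᶜ))) ?_
      filter_upwards [self_mem_nhdsWithin, nhdsWithin_le_nhds (isOpen_ball.mem_nhds hz)] with x hx hxb
      exact avg_eq hδ hδR hrR hxb hζ hx
    · exact avg_eq hδ hδR hrR hz hζ hz0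
  refine ⟨fun q => -(2 * Real.pi : ℂ)⁻¹ * T q, fun w => (2 * Real.pi : ℂ)⁻¹ * A ((δ : ℂ), w / δ),
    ?_, ?_, ?_, ?_, ?_⟩
  · intro q hq
    exact ((hTd q (hcR (ball_subset_closedBall hq))).differentiableAt.const_mul
      _).differentiableWithinAt
  · intro w hw
    exact ((hBd w hw).const_mul _).differentiableWithinAt
  · intro z ζ hz hζ
    have hp := hcR (ball_subset_closedBall (hmem z ζ hz hζ))
    have hTp := hTd _ hp
    have he := eqn hrR hp
    set L := ∫ t in (0 : ℝ)..2 * Real.pi, (t : ℂ) • (fderiv ℂ r (rot t (z, ζ))).comp (rot t) with hL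
    have d1 : HasDerivAt (fun w => T (w, ζ)) (L (1, 0)) z :=
      HasFDerivAt.comp_hasDerivAt z (f := fun w : ℂ => (w, ζ)) hTp
        ((hasDerivAt_id z).prodMk (hasDerivAt_const z ζ))
    have d2 : HasDerivAt (fun w => T (z, w)) (L (0, 1)) ζ :=
      HasFDerivAt.comp_hasDerivAt ζ (f := fun w : ℂ => (z, w)) hTp
        ((hasDerivAt_const ζ z).prodMk (hasDerivAt_id ζ))
    rw [(d1.const_mul _).deriv, (d2.const_mul _).deriv]
    have hlin : L (I * z, -(I * ζ)) = I * z * L (1, 0) - I * ζ * L (0, 1) := by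
      have : ((I * z, -(I * ζ)) : ℂ × ℂ) = (I * z) • ((1, 0) : ℂ × ℂ) - (I * ζ) • ((0, 1) : ℂ × ℂ) := by
        ext <;> simp
      rw [this, map_sub, map_smul, map_smul, smul_eq_mul, smul_eq_mul]
    rw [hlin] at he
    change _ = _ - A (z, ζ) at he
    rw [hAeq z ζ hz hζ] at he
    have e2 : A ((δ : ℂ), z * ζ / δ) =
        2 * Real.pi * r (z, ζ) - (I * z * L (1, 0) - I * ζ * L (0, 1)) := by rw [he]; ring
    simp only [e2]
    field_simp
    ring
  · intro z ζ hz hζ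
    have hp := ball_subset_closedBall (hmem z ζ hz hζ)
    have hTn : ‖T (z, ζ)‖ ≤ (2 * Real.pi * S) * |2 * Real.pi - 0| := by
      refine intervalIntegral.norm_integral_le_of_norm_le_const fun t ht => ?_
      rw [Set.uIoc_of_le hpi.le] at ht
      rw [norm_mul]
      have : ‖(t : ℂ)‖ ≤ 2 * Real.pi := by
        rw [Complex.norm_real, Real.norm_eq_abs, abs_of_pos ht.1]
        exact ht.2
      exact mul_le_mul this (hSrot _ hp t) (norm_nonneg _) hpi.le
    rw [sub_zero, abs_of_pos hpi] at hTn
    have hn : ‖-(2 * Real.pi : ℂ)⁻¹‖ = (2 * Real.pi)⁻¹ := by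
      rw [norm_neg, norm_inv]
      congr 1
      simp [abs_of_pos Real.pi_pos]
    rw [norm_mul, hn, inv_mul_le_iff₀ hpi]
    linarith
  · intro w hw
    have hAn : ‖A ((δ : ℂ), w / δ)‖ ≤ S * |2 * Real.pi - 0| :=
      intervalIntegral.norm_integral_le_of_norm_le_const fun t _ => hSrot _ (hwm w hw) t
    rw [sub_zero, abs_of_pos hpi] at hAn
    have hn : ‖(2 * Real.pi : ℂ)⁻¹‖ = (2 * Real.pi)⁻¹ := by
      rw [norm_inv]
      congr 1
      simp [abs_of_pos Real.pi_pos]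
    rw [norm_mul, hn, inv_mul_le_iff₀ hpi]
    have h1 : 1 ≤ 2 * Real.pi := by linarith [Real.pi_gt_three]
    have h2 : S ≤ 2 * Real.pi * S := by nlinarith
    nlinarith
end

section
/- Let μ ∈ ℂ \ {0} and let R be a holomorphic function on an open neighbourhood of (0,0) ∈ ℂ². Then there exist an open neighbourhood W of (0,0) in ℂ², a holomorphic function f on a neighbourhood of 0 ∈ ℂ, and a holomorphic function η on W with η(0,0) = 0, such that for all (z,ζ) ∈ W: R(z,ζ) = f(iμ·z·ζ) + iμ·(z·∂η/∂z(z,ζ) − ζ·∂η/∂ζ(z,ζ)). -/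
open Complex

/-- The rotation `(z, ζ) ↦ (e^{iθ} z, e^{-iθ} ζ)`. -/
noncomputable def hrot (θ : ℝ) : (ℂ × ℂ) →L[ℂ] (ℂ × ℂ) :=
  exp (θ * I) • (ContinuousLinearMap.inl ℂ ℂ ℂ).comp (ContinuousLinearMap.fst ℂ ℂ ℂ) +
    exp (-(θ * I)) • (ContinuousLinearMap.inr ℂ ℂ ℂ).comp (ContinuousLinearMap.snd ℂ ℂ ℂ)

lemma hrot_apply (θ : ℝ) (p : ℂ × ℂ) :
    hrot θ p = (exp (θ * I) * p.1, exp (-(θ * I)) * p.2) := by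
  simp [hrot]

lemma norm_exp_neg_I (θ : ℝ) : ‖exp (-(θ * I))‖ = 1 := by
  have := norm_exp_ofReal_mul_I (-θ)
  simpa using this

lemma hrot_norm (θ : ℝ) (p : ℂ × ℂ) : ‖hrot θ p‖ = ‖p‖ := by
  rw [hrot_apply, Prod.norm_def, Prod.norm_def]
  simp [norm_exp_ofReal_mul_I, norm_exp_neg_I]

lemma hrot_opnorm (θ : ℝ) : ‖hrot θ‖ ≤ 1 :=
  ContinuousLinearMap.opNorm_le_bound _ zero_le_one (fun p => by rw [hrot_norm, one_mul])

lemma hrot_cont : Continuous hrot := by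
  unfold hrot
  fun_prop

section
variable {R : ℂ × ℂ → ℂ} {r C : ℝ} {K : ℝ → ℂ}

lemma hrot_mem {θ : ℝ} {p : ℂ × ℂ} (hp : p ∈ Metric.ball (0 : ℂ × ℂ) r) :
    hrot θ p ∈ Metric.ball (0 : ℂ × ℂ) r := by
  simpa [hrot_norm] using hp

lemma R_rot_cont
    (hR : DifferentiableOn ℂ R (Metric.ball 0 r))
    {p : ℂ × ℂ} (hp : p ∈ Metric.ball (0 : ℂ × ℂ) r) :
    Continuous fun θ => R (hrot θ p) :=
  hR.continuousOn.comp_continuous (hrot_cont.clm_apply continuous_const) (fun _ => hrot_mem hp)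

lemma F'_meas (hK : Continuous K) (p : ℂ × ℂ) :
    MeasureTheory.StronglyMeasurable
      (fun θ => K θ • (fderiv ℂ R (hrot θ p)).comp (hrot θ)) := by
  have h1 : MeasureTheory.StronglyMeasurable (fun θ => fderiv ℂ R (hrot θ p)) :=
    ((measurable_fderiv ℂ R).comp
      (hrot_cont.clm_apply continuous_const).measurable).stronglyMeasurable
  have h2 : MeasureTheory.StronglyMeasurable hrot := hrot_cont.stronglyMeasurable
  have h3 : Continuous fun q : ((ℂ × ℂ) →L[ℂ] ℂ) × ((ℂ × ℂ) →L[ℂ] (ℂ × ℂ)) => q.1.comp q.2 :=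
    by fun_prop
  exact hK.stronglyMeasurable.smul (h3.comp_stronglyMeasurable (h1.prodMk h2))

lemma F'_bound
    (hC : ∀ p ∈ Metric.ball (0 : ℂ × ℂ) r, ‖fderiv ℂ R p‖ ≤ C)
    {p : ℂ × ℂ} (hp : p ∈ Metric.ball (0 : ℂ × ℂ) r) (θ : ℝ) :
    ‖K θ • (fderiv ℂ R (hrot θ p)).comp (hrot θ)‖ ≤ ‖K θ‖ * C := by
  rw [norm_smul]
  gcongr
  refine (ContinuousLinearMap.opNorm_comp_le _ _).trans ?_
  have h1 := hC _ (hrot_mem (θ := θ) hp)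
  nlinarith [hrot_opnorm θ, norm_nonneg (fderiv ℂ R (hrot θ p))]

lemma F'_int
    (hC : ∀ p ∈ Metric.ball (0 : ℂ × ℂ) r, ‖fderiv ℂ R p‖ ≤ C)
    (hK : Continuous K)
    {p : ℂ × ℂ} (hp : p ∈ Metric.ball (0 : ℂ × ℂ) r) (a b : ℝ) :
    IntervalIntegrable (fun θ => K θ • (fderiv ℂ R (hrot θ p)).comp (hrot θ))
      MeasureTheory.volume a b := by
  refine IntervalIntegrable.mono_fun' (g := fun θ => ‖K θ‖ * C)
    ((hK.norm.mul continuous_const).intervalIntegrable _ _)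
    (F'_meas hK p).aestronglyMeasurable ?_
  exact Filter.Eventually.of_forall fun θ => F'_bound hC hp θ

lemma G_hasFDerivAt
    (hR : DifferentiableOn ℂ R (Metric.ball 0 r))
    (hC : ∀ p ∈ Metric.ball (0 : ℂ × ℂ) r, ‖fderiv ℂ R p‖ ≤ C)
    (hK : Continuous K)
    {p : ℂ × ℂ} (hp : p ∈ Metric.ball (0 : ℂ × ℂ) r) (a b : ℝ) :
    HasFDerivAt (fun p => ∫ θ in a..b, K θ • R (hrot θ p))
      (∫ θ in a..b, K θ • (fderiv ℂ R (hrot θ p)).comp (hrot θ)) p := by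
  have hn : Metric.ball (0 : ℂ × ℂ) r ∈ nhds p := Metric.isOpen_ball.mem_nhds hp
  refine intervalIntegral.hasFDerivAt_integral_of_dominated_of_fderiv_le
    (F := fun p θ => K θ • R (hrot θ p))
    (F' := fun p θ => K θ • (fderiv ℂ R (hrot θ p)).comp (hrot θ))
    (bound := fun θ => ‖K θ‖ * C) hn ?_ ?_ ?_ ?_ ?_ ?_
  · filter_upwards [hn] with q hq
    exact (hK.smul (R_rot_cont hR hq)).aestronglyMeasurable
  · exact (hK.smul (R_rot_cont hR hp)).intervalIntegrable _ _
  · exact (F'_meas hK p).aestronglyMeasurable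
  · exact Filter.Eventually.of_forall fun θ _ q hq => F'_bound hC hq θ
  · exact (hK.norm.mul continuous_const).intervalIntegrable _ _
  · refine Filter.Eventually.of_forall fun θ _ q hq => ?_
    have h1 : HasFDerivAt R (fderiv ℂ R (hrot θ q)) (hrot θ q) :=
      (hR.differentiableAt (Metric.isOpen_ball.mem_nhds (hrot_mem hq))).hasFDerivAt
    exact (h1.comp q (hrot θ).hasFDerivAt).const_smul (K θ)

lemma R_rot_deriv
    (hR : DifferentiableOn ℂ R (Metric.ball 0 r))
    {z ζ : ℂ} (hp : (z, ζ) ∈ Metric.ball (0 : ℂ × ℂ) r) (θ : ℝ) :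
    HasDerivAt (fun θ : ℝ => R (hrot θ (z, ζ)))
      (I * fderiv ℂ R (hrot θ (z, ζ)) (hrot θ (z, -ζ))) θ := by
  have h1 : HasFDerivAt R (fderiv ℂ R (hrot θ (z, ζ))) (hrot θ (z, ζ)) :=
    (hR.differentiableAt (Metric.isOpen_ball.mem_nhds (hrot_mem hp))).hasFDerivAt
  have e0 : HasDerivAt (fun t : ℝ => (t : ℂ) * I) I θ := by
    simpa using (hasDerivAt_id θ).ofReal_comp.mul_const I
  have e1 := e0.cexp.mul_const z
  have e2 := e0.neg.cexp.mul_const ζ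
  have e3 : HasDerivAt (fun θ : ℝ => hrot θ (z, ζ)) (I • hrot θ (z, -ζ)) θ := by
    have := e1.prodMk e2
    simp only [hrot_apply]
    refine HasDerivAt.congr_deriv this ?_
    simp only [Prod.smul_mk, smul_eq_mul, Prod.mk.injEq, Pi.neg_apply]
    constructor <;> ring
  have := (h1.restrictScalars ℝ).comp_hasDerivAt θ e3
  refine HasDerivAt.congr_deriv this ?_
  simp

/-- Cohomological equation via integration by parts. -/
lemma G_L (hR : DifferentiableOn ℂ R (Metric.ball 0 r))
    (hC : ∀ p ∈ Metric.ball (0 : ℂ × ℂ) r, ‖fderiv ℂ R p‖ ≤ C)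
    {z ζ : ℂ} (hp : (z, ζ) ∈ Metric.ball (0 : ℂ × ℂ) r) :
    (∫ θ in (0:ℝ)..(2 * Real.pi),
      (θ : ℂ) • (fderiv ℂ R (hrot θ (z, ζ))).comp (hrot θ)) (z, -ζ)
    = -I * (2 * Real.pi * R (z, ζ) - ∫ θ in (0:ℝ)..(2 * Real.pi), (1 : ℂ) • R (hrot θ (z, ζ))) := by
  have hK : Continuous fun θ : ℝ => (θ : ℂ) := continuous_ofReal
  have hi := F'_int (K := fun θ : ℝ => (θ : ℂ)) hC hK hp 0 (2 * Real.pi)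
  have hi2 : IntervalIntegrable (fun θ : ℝ => ((θ : ℂ) • (fderiv ℂ R (hrot θ (z, ζ))).comp (hrot θ))
      (z, -ζ)) MeasureTheory.volume 0 (2 * Real.pi) := by
    rw [intervalIntegrable_iff] at hi ⊢
    exact (ContinuousLinearMap.apply ℂ ℂ ((z, -ζ) : ℂ × ℂ)).integrable_comp hi
  have hc := (R_rot_cont hR hp).intervalIntegrable (μ := MeasureTheory.volume) 0 (2 * Real.pi)
  rw [ContinuousLinearMap.intervalIntegral_apply hi]
  have key := intervalIntegral.integral_eq_sub_of_hasDerivAt (a := 0) (b := 2 * Real.pi)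
    (f := fun θ : ℝ => (θ : ℂ) * R (hrot θ (z, ζ)))
    (f' := fun θ : ℝ => R (hrot θ (z, ζ)) + I * (((θ : ℂ) • (fderiv ℂ R (hrot θ (z, ζ))).comp (hrot θ))
      (z, -ζ))) ?_ (hc.add (hi2.const_mul I))
  · rw [intervalIntegral.integral_add hc (hi2.const_mul I),
      intervalIntegral.integral_const_mul] at key
    have e : hrot (2 * Real.pi) (z, ζ) = (z, ζ) := by
      simp [hrot_apply, exp_neg]
    simp only [e] at key
    simp only [one_smul]
    rw [ofReal_mul, ofReal_ofNat, ofReal_zero] at key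
    linear_combination (-I) * key + (∫ θ in (0:ℝ)..(2 * Real.pi),
      ((θ : ℂ) • (fderiv ℂ R (hrot θ (z, ζ))).comp (hrot θ)) (z, -ζ)) * I_mul_I
  · intro θ _
    have := (hasDerivAt_id θ).ofReal_comp.mul (R_rot_deriv hR hp θ)
    refine HasDerivAt.congr_deriv this ?_
    simp; ring

lemma circ_avg (g : ℂ → ℂ) {t : ℝ} (ht : 0 < t) :
    (∮ w in C(0, t), (w - 0)⁻¹ • g w) = I * ∫ θ in (0:ℝ)..(2 * Real.pi), g (circleMap 0 t θ) := by
  rw [circleIntegral, ← intervalIntegral.integral_const_mul]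
  congr 1
  ext θ
  have : circleMap 0 t θ ≠ 0 := circleMap_ne_center ht.ne'
  rw [deriv_circleMap]
  simp only [smul_eq_mul, sub_zero]
  field_simp

lemma A_eq_circ {z ζ : ℂ} (hz : z ≠ 0) :
    (∫ θ in (0:ℝ)..(2 * Real.pi), (1 : ℂ) • R (hrot θ (z, ζ)))
      = ∫ θ in (0:ℝ)..(2 * Real.pi), (fun w => R (w, z * ζ / w)) (circleMap 0 ‖z‖ θ) := by
  have h1 : ∀ θ : ℝ, (1 : ℂ) • R (hrot θ (z, ζ)) =
      (fun θ => (fun w => R (w, z * ζ / w)) (circleMap 0 ‖z‖ θ)) (θ + arg z) := by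
    intro θ
    have e : circleMap 0 ‖z‖ (θ + arg z) = exp (θ * I) * z := by
      conv_rhs => rw [← norm_mul_exp_arg_mul_I z]
      simp only [circleMap, zero_add, ofReal_add, add_mul, exp_add]
      ring
    simp only [e, one_smul, hrot_apply]
    congr 2
    rw [exp_neg]
    field_simp
  simp_rw [h1]
  rw [intervalIntegral.integral_comp_add_right (fun θ => (fun w => R (w, z * ζ / w)) (circleMap 0 ‖z‖ θ))]
  have hper : Function.Periodic (fun θ => (fun w => R (w, z * ζ / w)) (circleMap 0 ‖z‖ θ))
      (2 * Real.pi) := fun θ => by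
    simp only [periodic_circleMap 0 ‖z‖ θ]
  have := hper.intervalIntegral_add_eq (arg z) 0
  rw [zero_add] at this
  rw [zero_add, add_comm (2 * Real.pi), this]

lemma A_inv_ne
    (hR : DifferentiableOn ℂ R (Metric.ball 0 r))
    {ρ : ℝ} (hρ : 0 < ρ) (hρr : ρ < r) {z ζ : ℂ} (hz : z ≠ 0) (hzρ : ‖z‖ < ρ)
    (hζρ : ‖ζ‖ < ρ) :
    (∫ θ in (0:ℝ)..(2 * Real.pi), (1 : ℂ) • R (hrot θ (z, ζ)))
      = ∫ θ in (0:ℝ)..(2 * Real.pi), (1 : ℂ) • R (hrot θ ((ρ : ℂ), z * ζ / ρ)) := by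
  have hρ0 : (ρ : ℂ) ≠ 0 := by exact_mod_cast hρ.ne'
  have hz0 : 0 < ‖z‖ := norm_pos_iff.2 hz
  rw [A_eq_circ hz, A_eq_circ hρ0]
  have e1 : (ρ : ℂ) * (z * ζ / ρ) = z * ζ := by field_simp
  have e2 : ‖(ρ : ℂ)‖ = ρ := by simp [abs_of_pos hρ]
  rw [e1, e2]
  have hd : ∀ w ∈ Metric.closedBall (0 : ℂ) ρ \ Metric.ball 0 ‖z‖,
      DifferentiableAt ℂ (fun w => R (w, z * ζ / w)) w := by
    intro w hw
    simp only [Set.mem_sdiff, Metric.mem_closedBall, Metric.mem_ball, dist_zero_right, not_lt] at hw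
    have hw0 : w ≠ 0 := norm_pos_iff.1 (hz0.trans_le hw.2)
    have hm : (w, z * ζ / w) ∈ Metric.ball (0 : ℂ × ℂ) r := by
      rw [mem_ball_zero_iff, Prod.norm_def, max_lt_iff]
      refine ⟨hw.1.trans_lt hρr, ?_⟩
      simp only [norm_div, norm_mul]
      rw [div_lt_iff₀ (hz0.trans_le hw.2)]
      nlinarith [norm_nonneg ζ]
    have h1 := hR.differentiableAt (Metric.isOpen_ball.mem_nhds hm)
    have h2 : DifferentiableAt ℂ (fun w : ℂ => (w, z * ζ / w)) w :=
      differentiableAt_id.prodMk ((differentiableAt_const _).div differentiableAt_id hw0)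
    exact DifferentiableAt.comp w h1 h2
  have := circleIntegral_sub_center_inv_smul_eq_of_differentiable_on_annulus_off_countable
    (c := 0) hz0 hzρ.le (f := fun w => R (w, z * ζ / w)) Set.countable_empty
    (fun w hw => (hd w hw).continuousAt.continuousWithinAt)
    (fun w hw => hd w ⟨Metric.ball_subset_closedBall hw.1.1,
      fun h => hw.1.2 (Metric.ball_subset_closedBall h)⟩)
  rw [circ_avg _ hρ, circ_avg _ hz0] at this
  exact (mul_left_cancel₀ I_ne_zero this).symm

lemma A_inv
    (hR : DifferentiableOn ℂ R (Metric.ball 0 r))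
    (hC : ∀ p ∈ Metric.ball (0 : ℂ × ℂ) r, ‖fderiv ℂ R p‖ ≤ C)
    {ρ : ℝ} (hρ : 0 < ρ) (hρr : ρ < r) {z ζ : ℂ} (hzρ : ‖z‖ < ρ)
    (hζρ : ‖ζ‖ < ρ) :
    (∫ θ in (0:ℝ)..(2 * Real.pi), (1 : ℂ) • R (hrot θ (z, ζ)))
      = ∫ θ in (0:ℝ)..(2 * Real.pi), (1 : ℂ) • R (hrot θ ((ρ : ℂ), z * ζ / ρ)) := by
  by_cases hz : z = 0
  swap
  · exact A_inv_ne hR hρ hρr hz hzρ hζρ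
  subst hz
  set A : ℂ × ℂ → ℂ := fun p => ∫ θ in (0:ℝ)..(2 * Real.pi), (1 : ℂ) • R (hrot θ p) with hA
  have hcA : ∀ p ∈ Metric.ball (0 : ℂ × ℂ) r, ContinuousAt A p := fun p hp =>
    (G_hasFDerivAt (K := fun _ => 1) hR hC continuous_const hp 0 (2 * Real.pi)).continuousAt
  have c1 : ContinuousAt (fun z : ℂ => A (z, ζ)) 0 := by
    refine ContinuousAt.comp (f := fun z : ℂ => (z, ζ)) (hcA _ ?_) (by fun_prop)
    simp [Prod.norm_def]
    exact hζρ.trans hρr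
  have c2 : ContinuousAt (fun z : ℂ => A (ρ, z * ζ / ρ)) 0 := by
    refine ContinuousAt.comp (f := fun z : ℂ => ((ρ : ℂ), z * ζ / ρ)) (hcA _ ?_) (by fun_prop)
    simp [Prod.norm_def, abs_of_pos hρ]
    exact ⟨hρr, hρ.trans hρr⟩
  have t1 := c1.tendsto.mono_left (nhdsWithin_le_nhds (s := {0}ᶜ))
  have t2 := c2.tendsto.mono_left (nhdsWithin_le_nhds (s := {0}ᶜ))
  refine tendsto_nhds_unique t1 (t2.congr' ?_)
  have hb : Metric.ball (0 : ℂ) ρ ∈ nhdsWithin (0 : ℂ) {0}ᶜ :=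
    nhdsWithin_le_nhds (Metric.ball_mem_nhds _ hρ)
  filter_upwards [hb, self_mem_nhdsWithin] with w hw hw0
  exact (A_inv_ne hR hρ hρr hw0 (by simpa using hw) hζρ).symm

end

/-- The homological equation: any holomorphic R near (0,0) ∈ ℂ² can be written as
R(z,ζ) = f(iμzζ) + iμ(z∂_zη − ζ∂_ζη) with η(0,0) = 0. -/
theorem stmt4
    (μ : ℂ) (hμ : μ ≠ 0)
    (U : Set (ℂ × ℂ)) (hU : IsOpen U) (h0U : (0 : ℂ × ℂ) ∈ U)
    (R : ℂ × ℂ → ℂ) (hR : DifferentiableOn ℂ R U) :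
    ∃ (W : Set (ℂ × ℂ)) (Vf : Set ℂ) (f : ℂ → ℂ) (η : ℂ × ℂ → ℂ),
      IsOpen W ∧ (0 : ℂ × ℂ) ∈ W ∧
      IsOpen Vf ∧ (0 : ℂ) ∈ Vf ∧
      DifferentiableOn ℂ f Vf ∧
      DifferentiableOn ℂ η W ∧ η (0, 0) = 0 ∧
      ∀ z ζ : ℂ, (z, ζ) ∈ W →
        Complex.I * μ * z * ζ ∈ Vf ∧
        R (z, ζ) = f (Complex.I * μ * z * ζ) + Complex.I * μ *
          (z * deriv (fun w => η (w, ζ)) z - ζ * deriv (fun w => η (z, w)) ζ) := by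
  have hcont : ContinuousAt R 0 := (hR.differentiableAt (hU.mem_nhds h0U)).continuousAt
  obtain ⟨s, hs, hsub⟩ := Metric.mem_nhds_iff.1
    (Filter.inter_mem (hU.mem_nhds h0U) (hcont.preimage_mem_nhds (Metric.ball_mem_nhds (R 0) one_pos)))
  have hRs : DifferentiableOn ℂ R (Metric.ball 0 s) := hR.mono fun x hx => (hsub hx).1
  obtain ⟨r, hr, rfl⟩ : ∃ r, 0 < r ∧ s = 2 * r := ⟨s / 2, by positivity, by ring⟩
  have hRr : DifferentiableOn ℂ R (Metric.ball 0 r) :=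
    hRs.mono (Metric.ball_subset_ball (by linarith))
  have hC : ∀ p ∈ Metric.ball (0 : ℂ × ℂ) r, ‖fderiv ℂ R p‖ ≤ 2 / r := by
    intro p hp
    have hsb : Metric.ball p r ⊆ Metric.ball 0 (2 * r) :=
      Metric.ball_subset_ball' (by rw [Metric.mem_ball] at hp; linarith)
    refine norm_fderiv_le_div_of_mapsTo_ball (hRs.mono hsb) ?_ hr
    intro q hq
    have h1 := (hsub (hsb hq)).2
    have h2 := (hsub (hsb (Metric.mem_ball_self hr))).2
    simp only [Set.mem_preimage, Metric.mem_ball, Metric.mem_closedBall] at h1 h2 ⊢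
    linarith [dist_triangle_right (R q) (R p) (R 0)]
  obtain ⟨ρ, hρ, hρr⟩ := exists_between hr
  have hρ0 : (ρ : ℂ) ≠ 0 := by exact_mod_cast hρ.ne'
  have hπ : (Real.pi : ℂ) ≠ 0 := by exact_mod_cast Real.pi_ne_zero
  set A : ℂ × ℂ → ℂ := fun p => ∫ θ in (0:ℝ)..(2 * Real.pi), (1 : ℂ) • R (hrot θ p) with hA
  set B : ℂ × ℂ → ℂ := fun p => ∫ θ in (0:ℝ)..(2 * Real.pi), (θ : ℂ) • R (hrot θ p) with hB
  have hdA : ∀ p ∈ Metric.ball (0 : ℂ × ℂ) r, DifferentiableAt ℂ A p := fun p hp =>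
    (G_hasFDerivAt (K := fun _ => 1) hRr hC continuous_const hp 0 (2 * Real.pi)).differentiableAt
  have hdB := fun p (hp : p ∈ Metric.ball (0 : ℂ × ℂ) r) =>
    (G_hasFDerivAt (K := fun θ : ℝ => (θ : ℂ)) hRr hC continuous_ofReal hp 0 (2 * Real.pi))
  set c : ℂ := (2 * Real.pi * μ)⁻¹ with hc
  refine ⟨Metric.ball 0 ρ, {q | ‖q / (I * μ * ρ)‖ < r},
    fun q => (2 * Real.pi : ℂ)⁻¹ * A (ρ, q / (I * μ * ρ)), fun p => c * (B p - B (0, 0)),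
    Metric.isOpen_ball, Metric.mem_ball_self hρ, ?_, by simpa using hr, ?_, ?_, by simp, ?_⟩
  · exact isOpen_lt (by fun_prop) continuous_const
  · intro q hq
    have hm : ((ρ : ℂ), q / (I * μ * ρ)) ∈ Metric.ball (0 : ℂ × ℂ) r := by
      rw [mem_ball_zero_iff, Prod.norm_def, max_lt_iff]
      exact ⟨by simpa [abs_of_pos hρ] using hρr, hq⟩
    have h2 : DifferentiableAt ℂ (fun q : ℂ => ((ρ : ℂ), q / (I * μ * ρ))) q := by fun_prop
    exact ((DifferentiableAt.comp q (hdA _ hm) h2).const_mul _).differentiableWithinAt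
  · intro p hp
    have hp' := Metric.ball_subset_ball hρr.le hp
    exact (((hdB p hp').differentiableAt.sub_const _).const_mul _).differentiableWithinAt
  · intro z ζ hp
    have hp' := Metric.ball_subset_ball hρr.le hp
    have hn := hp
    rw [mem_ball_zero_iff, Prod.norm_def, max_lt_iff] at hn
    obtain ⟨hz, hζ⟩ := hn
    simp only at hz hζ
    have eq : I * μ * z * ζ / (I * μ * ρ) = z * ζ / ρ := by
      have := I_ne_zero
      field_simp
    refine ⟨?_, ?_⟩
    · change ‖I * μ * z * ζ / (I * μ * ρ)‖ < r
      rw [eq]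
      simp only [norm_div, norm_mul, norm_real, Real.norm_eq_abs,
        abs_of_pos hρ]
      rw [div_lt_iff₀ hρ]
      nlinarith [norm_nonneg z, norm_nonneg ζ]
    · have hD := hdB _ hp'
      have hL := G_L hRr hC hp'
      set D := ∫ θ in (0:ℝ)..(2 * Real.pi),
        (θ : ℂ) • (fderiv ℂ R (hrot θ (z, ζ))).comp (hrot θ) with hDdef
      have d1 : HasDerivAt (fun w => c * (B (w, ζ) - B (0, 0))) (c * D (1, 0)) z := by
        have h : HasDerivAt (fun w : ℂ => (w, ζ)) ((1 : ℂ), (0 : ℂ)) z :=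
          (hasDerivAt_id z).prodMk (hasDerivAt_const z ζ)
        exact ((HasFDerivAt.comp_hasDerivAt z hD h).sub_const _).const_mul c
      have d2 : HasDerivAt (fun w => c * (B (z, w) - B (0, 0))) (c * D (0, 1)) ζ := by
        have h : HasDerivAt (fun w : ℂ => (z, w)) ((0 : ℂ), (1 : ℂ)) ζ :=
          (hasDerivAt_const ζ z).prodMk (hasDerivAt_id ζ)
        exact ((HasFDerivAt.comp_hasDerivAt ζ hD h).sub_const _).const_mul c
      rw [d1.deriv, d2.deriv]
      beta_reduce
      rw [eq]
      have hAi : A (z, ζ) = A (ρ, z * ζ / ρ) := A_inv hRr hC hρ hρr hz hζ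
      rw [← hAi]
      have hlin : D (z, -ζ) = z * D (1, 0) - ζ * D (0, 1) := by
        have : ((z, -ζ) : ℂ × ℂ) = z • (1, 0) - ζ • (0, 1) := by simp
        rw [this, map_sub, map_smul, map_smul, smul_eq_mul, smul_eq_mul]
      have hL' : z * D (1, 0) - ζ * D (0, 1) = -I * (2 * Real.pi * R (z, ζ) - A (z, ζ)) := by
        rw [← hlin]; exact hL
      have h3 : z * (c * D (1, 0)) - ζ * (c * D (0, 1))
          = c * (-I * (2 * Real.pi * R (z, ζ) - A (z, ζ))) := by
        rw [← hL']; ring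
      rw [h3, hc]
      field_simp
      linear_combination (2 * Real.pi * R (z, ζ) - A (z, ζ)) * I_sq
end
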